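/- Integrality and pole–zero pairing (Theorem 1.1(a) for tensor powers): all the reciprocal zeros α_i and reciprocal poles β_j are algebraic integers, and for each reciprocal pole β_j there exist an index i_j ∈ {1,...,R} and a positive integer m_j such that β_j = q^{m_j}·α_{i_j}. -/

import Mathlib

open scoped BigOperators Classical Pointwise

set_option maxHeartbeats 1000000
set_option synthInstance.maxHeartbeats 400000

noncomputable section

namespace HS

/-- A fixed algebraic closure of the prime field `F_p`. -/
abbrev Omg (p : ℕ) [Fact p.Prime] : Type := AlgebraicClosure (ZMod p)

/-- The absolute trace `Tr_{F_{p^d}/F_p}(y) = ∑_{j<d} y^{p^j}`, read back in `ZMod p`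
via the (injective) structure map `ZMod p → Omg p`. -/
def traceZmod (p : ℕ) [Fact p.Prime] (d : ℕ) (y : Omg p) : ZMod p :=
  Function.invFun (algebraMap (ZMod p) (Omg p)) (∑ j ∈ Finset.range d, y ^ p ^ j)

/-- Value of the Laurent monomial `x^μ`. -/
def mon {K : Type} [Field K] {n : ℕ} (x : Fin n → K) (μ : Fin n → ℤ) : K :=
  ∏ i, x i ^ μ i

/-- Value of the Laurent polynomial `Ḡ(x,t) = f̄(x) + P̄(x,t)`, where `f̄` and `P̄` are given
by their (finitely supported) coefficient functions: for `P̄`, the index `(μ, γ)` records the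
`x`-exponent `μ` and the `t`-exponent `γ`. -/
def Gval {K : Type} [Field K] {n s : ℕ} (f : (Fin n → ℤ) →₀ K)
    (P : ((Fin n → ℤ) × (Fin s → ℤ)) →₀ K) (x : Fin n → K) (t : Fin s → K) : K :=
  (f.sum fun μ c => c * mon x μ) + P.sum fun gm c => c * mon x gm.1 * mon t gm.2

/-- View an integral exponent vector as a real vector. -/
def toR {n : ℕ} (u : Fin n → ℤ) : Fin n → ℝ := fun i => (u i : ℝ)

/-- The Newton polyhedron at infinity `Δ_∞(f̄)`: convex hull of the origin and the
exponent vectors of the monomials of `f̄`. -/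
def NewtonPoly {K : Type} [Field K] {n : ℕ} (f : (Fin n → ℤ) →₀ K) : Set (Fin n → ℝ) :=
  convexHull ℝ (insert 0 (toR '' (f.support : Set (Fin n → ℤ))))

/-- The value at `x` of `x_i ∂f̄^σ/∂x_i`, where `f̄^σ` is the sum of the terms of `f̄`
whose exponent vector lies in the face `σ`. -/
def faceSum {K : Type} [Field K] {n : ℕ} (f : (Fin n → ℤ) →₀ K) (σ : Set (Fin n → ℝ))
    (i : Fin n) (x : Fin n → K) : K :=
  ∑ μ ∈ f.support.filter (fun μ => toR μ ∈ σ), (μ i : K) * f μ * mon x μ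

/-- Nondegeneracy of `f̄` with respect to its Newton polyhedron at infinity: for every
closed face (= exposed subset) not containing the origin, the logarithmic partials of
`f̄^σ` have no common zero with all coordinates nonzero. -/
def Nondeg {K : Type} [Field K] {n : ℕ} (f : (Fin n → ℤ) →₀ K) : Prop :=
  ∀ σ : Set (Fin n → ℝ), IsExposed ℝ (NewtonPoly f) σ → σ.Nonempty → (0 : Fin n → ℝ) ∉ σ →
    ¬ ∃ x : Fin n → K, (∀ i, x i ≠ 0) ∧ ∀ i, faceSum f σ i x = 0

/-- The relative polytope `Γ`: convex hull of the origin and the points `(1/(1-w(μ)))•γ`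
for `(μ,γ)` running over the exponents of `P̄`; here `w` is the gauge of `Δ_∞(f̄)`. -/
def relPoly {K : Type} [Field K] {n s : ℕ} (f : (Fin n → ℤ) →₀ K)
    (P : ((Fin n → ℤ) × (Fin s → ℤ)) →₀ K) : Set (Fin s → ℝ) :=
  convexHull ℝ (insert 0 ((fun gm : (Fin n → ℤ) × (Fin s → ℤ) =>
    (1 - gauge (NewtonPoly f) (toR gm.1))⁻¹ • toR gm.2) '' (P.support : Set _)))

/-- Dimension of the smallest linear subspace containing a set. -/
def dimSpan {s : ℕ} (Γ : Set (Fin s → ℝ)) : ℕ :=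
  Module.finrank ℝ (Submodule.span ℝ Γ)

/-- The lattice-normalized `d`-dimensional volume of a rational polytope `Γ`, defined
(Ehrhart-style) as `lim_{m→∞} #(mΓ ∩ ℤ^s)/m^d`.  When `d` is the dimension of the span of
`Γ`, this is the volume of `Γ` computed in that span with respect to the Haar measure
normalized so that a fundamental domain of the lattice has volume 1. -/
def latticeVol {s : ℕ} (Γ : Set (Fin s → ℝ)) (d : ℕ) : ℝ :=
  Filter.limUnder Filter.atTop fun m : ℕ =>
    (Nat.card {u : Fin s → ℤ // toR u ∈ (m : ℝ) • Γ} : ℝ) / (m : ℝ) ^ d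

/-- The cone over a set: union of the rays from the origin through its points. -/
def coneOf {s : ℕ} (Γ : Set (Fin s → ℝ)) : Set (Fin s → ℝ) :=
  {v | ∃ c : ℝ, 0 ≤ c ∧ ∃ γ ∈ Γ, v = c • γ}

/-- `w(Γ) = min { w_Γ(u) : u ∈ ℤ^s ∩ Cone(Γ), all coordinates of u ≥ 1 }`,
where `w_Γ` is the gauge of `Γ`. -/
def wMin {s : ℕ} (Γ : Set (Fin s → ℝ)) : ℝ :=
  sInf {r : ℝ | ∃ u : Fin s → ℤ, (∀ i, (1 : ℤ) ≤ u i) ∧ toR u ∈ coneOf Γ ∧ r = gauge Γ (toR u)}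

/-- The cyclotomic field `ℚ(ζ)` inside `ℂ`. -/
def cyclo (ζ : ℂ) : Subfield ℂ := Subfield.closure {ζ}

/-- The toric exponential sum `∑_{x ∈ (F_{p^d}^×)^n} Θ(Tr(Ḡ(x,t)))`. -/
def torSum (p : ℕ) [Fact p.Prime] {n s : ℕ} (Θ : AddChar (ZMod p) ℂ)
    (f : (Fin n → ℤ) →₀ Omg p) (P : ((Fin n → ℤ) × (Fin s → ℤ)) →₀ Omg p)
    (d : ℕ) (t : Fin s → Omg p) : ℂ :=
  ∑ᶠ (x : Fin n → Omg p) (_ : ∀ i, x i ^ p ^ d = x i ∧ x i ≠ 0),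
    Θ (traceZmod p d (Gval f P x t))

/-- `N_m` for the `k`-th tensor power family over the torus `G_m^s`. -/
def Ntor (p a : ℕ) [Fact p.Prime] {n s : ℕ} (Θ : AddChar (ZMod p) ℂ)
    (f : (Fin n → ℤ) →₀ Omg p) (P : ((Fin n → ℤ) × (Fin s → ℤ)) →₀ Omg p)
    (k m : ℕ) : ℂ :=
  ∑ᶠ (t : Fin s → Omg p) (_ : ∀ j, t j ^ p ^ (a * m) = t j ∧ t j ≠ 0),
    ((-1 : ℂ) ^ n * torSum p Θ f P (a * m) t) ^ k

/-- `N_m` for the `k`-th tensor power family over the affine base `A^s`. -/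
def Naff (p a : ℕ) [Fact p.Prime] {n s : ℕ} (Θ : AddChar (ZMod p) ℂ)
    (f : (Fin n → ℤ) →₀ Omg p) (P : ((Fin n → ℤ) × (Fin s → ℤ)) →₀ Omg p)
    (k m : ℕ) : ℂ :=
  ∑ᶠ (t : Fin s → Omg p) (_ : ∀ j, t j ^ p ^ (a * m) = t j),
    ((-1 : ℂ) ^ n * torSum p Θ f P (a * m) t) ^ k

/-- The `𝔭`-adic valuation of an algebraic number `x` lying in the ring of integers of a
subfield `F ⊆ ℂ`: the largest `t` with `x ∈ 𝔭^t`. -/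
def ordIn (F : Subfield ℂ) (Pid : Ideal (NumberField.RingOfIntegers F)) (x : ℂ) : ℕ :=
  sSup {t : ℕ | ∃ y : NumberField.RingOfIntegers F,
    ((algebraMap (NumberField.RingOfIntegers F) F y : F) : ℂ) = x ∧ y ∈ Pid ^ t}

/-- The `𝔭`-adic valuation on a subring of `ℂ`. -/
def ordSub (R0 : Subring ℂ) (Pid : Ideal R0) (x : ℂ) : ℕ :=
  sSup {t : ℕ | ∃ y : R0, (y : ℂ) = x ∧ y ∈ Pid ^ t}

/-- The degree `[F_q(λ):F_q]` of a point `λ ∈ F̄_q^s`, where `q = p^a`. -/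
def degOf (p a : ℕ) [Fact p.Prime] {s : ℕ} (lam : Fin s → Omg p) : ℕ :=
  sInf {d : ℕ | 0 < d ∧ ∀ j, lam j ^ p ^ (a * d) = lam j}

/-!
The `k`-th moment `N_m` is, up to sign, the exponential sum of the Laurent polynomial
`∑ b : Fin k, Ḡ (x b, t)` over a torus of dimension `N = s + k * n`. Embed `ℂ` into `ℂ_[p]`. By
Dwork's trace formula the exponential sum equals `(q ^ m - 1) ^ N` times the trace of the `m`-th
power of a completely continuous operator, whose Fredholm determinant `A` is entire. Inverting this
relation, `A` is, up to signs in the exponents, the product of the `L (q ^ i * T)`, `i ≥ 0`, with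
positive multiplicities. If `z` is a pole of `L` and no `q ^ m * z` with `m ≥ 1` is a zero, then all
factors contribute with the same sign to the order of this product at `z`, which makes it negative.

For the integrality, eliminating all but one of the `α i` and `β j` by a linear recurrence from the
power sums `∑ i, α i ^ m - ∑ j, β j ^ m`, which lie in the finitely generated ring of the character
values, puts a nonzero multiple of every power `α i ^ m` into a fixed finitely generated `ℤ`-module.
-/

section PowerSums

open PowerSeries Finset

variable {R S : Type*} [CommRing R] [CommRing S]

/-- `HasPowerSums v A` says that `A = exp (-∑_{m ≥ 1} v m * T ^ m / m)`, written without
denominators as a logarithmic differential equation. The name comes from `A = ∏ i, (1 - c i * T)`,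
for which `v m = ∑ i, c i ^ m`; the value `v 0` plays no role. -/
structure HasPowerSums (v : ℕ → R) (A : R⟦X⟧) : Prop where
  constantCoeff_eq_one : constantCoeff A = 1
  derivative_eq : d⁄dX R A = -PowerSeries.mk (fun m ↦ v (m + 1)) * A

namespace HasPowerSums

variable {v w : ℕ → R} {A B : R⟦X⟧}

theorem congr (hA : HasPowerSums v A) (h : ∀ m, 1 ≤ m → v m = w m) : HasPowerSums w A where
  constantCoeff_eq_one := hA.constantCoeff_eq_one
  derivative_eq := by
    have : (fun m ↦ v (m + 1)) = fun m ↦ w (m + 1) := funext fun m ↦ h _ (Nat.le_add_left 1 m)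
    rw [hA.derivative_eq, this]

theorem one : HasPowerSums (0 : ℕ → R) 1 where
  constantCoeff_eq_one := map_one _
  derivative_eq := by ext; simp

theorem mul (hA : HasPowerSums v A) (hB : HasPowerSums w B) : HasPowerSums (v + w) (A * B) where
  constantCoeff_eq_one := by
    rw [map_mul, hA.constantCoeff_eq_one, hB.constantCoeff_eq_one, one_mul]
  derivative_eq := by
    have hadd : PowerSeries.mk (fun m ↦ (v + w) (m + 1)) =
        PowerSeries.mk (fun m ↦ v (m + 1)) + PowerSeries.mk fun m ↦ w (m + 1) := by
      ext; simp
    rw [Derivation.leibniz, hA.derivative_eq, hB.derivative_eq, hadd, smul_eq_mul, smul_eq_mul]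
    ring

theorem prod {ι : Type*} {s : Finset ι} {v : ι → ℕ → R} {A : ι → R⟦X⟧}
    (h : ∀ i ∈ s, HasPowerSums (v i) (A i)) : HasPowerSums (∑ i ∈ s, v i) (∏ i ∈ s, A i) := by
  induction s using Finset.cons_induction with
  | empty => exact one
  | cons i s hi ih =>
    rw [sum_cons, prod_cons]
    exact (h i (mem_cons_self i s)).mul (ih fun j hj ↦ h j (mem_cons_of_mem hj))

theorem pow (hA : HasPowerSums v A) (n : ℕ) : HasPowerSums (n • v) (A ^ n) := by
  simpa using prod (s := range n) fun _ _ ↦ hA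

theorem one_sub_C_mul_X (c : R) : HasPowerSums (fun m ↦ c ^ m) (1 - C c * X) where
  constantCoeff_eq_one := by simp
  derivative_eq := by
    have hD : d⁄dX R (1 - C c * X) = -C c := by simp
    rw [hD, neg_mul, neg_inj]
    ext (_ | n)
    · simp
    · rw [mul_sub, mul_one, map_sub, ← mul_assoc, coeff_succ_mul_X, coeff_mul_C, coeff_mk, coeff_mk,
        pow_succ, sub_self, coeff_succ_C]

theorem rescale (hA : HasPowerSums v A) (c : R) :
    HasPowerSums (fun m ↦ c ^ m * v m) (PowerSeries.rescale c A) where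
  constantCoeff_eq_one := by
    rw [← coeff_zero_eq_constantCoeff_apply, coeff_rescale, pow_zero, one_mul,
      coeff_zero_eq_constantCoeff_apply, hA.constantCoeff_eq_one]
  derivative_eq := by
    have hD (F : R⟦X⟧) : d⁄dX R (PowerSeries.rescale c F) =
        C c * PowerSeries.rescale c (d⁄dX R F) := by
      ext n
      simp only [coeff_derivative, coeff_rescale, coeff_C_mul]
      ring
    have hmk : C c * PowerSeries.rescale c (PowerSeries.mk fun m ↦ v (m + 1)) =
        PowerSeries.mk fun m ↦ c ^ (m + 1) * v (m + 1) := by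
      ext n
      simp only [coeff_C_mul, coeff_rescale, coeff_mk]
      ring
    rw [hD, hA.derivative_eq, map_mul, map_neg, ← mul_assoc, mul_neg, hmk]

theorem map (hA : HasPowerSums v A) (f : R →+* S) :
    HasPowerSums (fun m ↦ f (v m)) (PowerSeries.map f A) where
  constantCoeff_eq_one := by
    rw [← coeff_zero_eq_constantCoeff_apply, coeff_map, coeff_zero_eq_constantCoeff_apply,
      hA.constantCoeff_eq_one, map_one]
  derivative_eq := by
    have hD : d⁄dX S (PowerSeries.map f A) = PowerSeries.map f (d⁄dX R A) := by
      ext n; simp [coeff_derivative]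
    have hmk : PowerSeries.map f (PowerSeries.mk fun m ↦ v (m + 1)) =
        PowerSeries.mk fun m ↦ f (v (m + 1)) := by
      ext n; simp
    rw [hD, hA.derivative_eq, map_mul, map_neg, hmk]

theorem coeff_succ (hA : HasPowerSums v A) (r : ℕ) :
    coeff (r + 1) A * (r + 1) = -∑ ij ∈ antidiagonal r, v (ij.1 + 1) * coeff ij.2 A := by
  rw [← coeff_derivative, hA.derivative_eq, neg_mul, map_neg, coeff_mul]
  simp only [coeff_mk]

theorem coeff_eq [IsDomain R] [CharZero R] (hA : HasPowerSums v A) (hB : HasPowerSums w B) {M : ℕ}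
    (h : ∀ m, 1 ≤ m → m ≤ M → v m = w m) : ∀ r ≤ M, coeff r A = coeff r B := by
  intro r
  induction r using Nat.strong_induction_on with
  | _ r ih =>
    intro hr
    rcases r with _ | r
    · simp only [coeff_zero_eq_constantCoeff_apply, hA.constantCoeff_eq_one,
        hB.constantCoeff_eq_one]
    · refine mul_right_cancel₀ (Nat.cast_add_one_ne_zero r : (r + 1 : R) ≠ 0) ?_
      rw [hA.coeff_succ, hB.coeff_succ]
      congr 1
      refine sum_congr rfl fun ij hij ↦ ?_
      have := mem_antidiagonal.1 hij
      rw [h _ (by omega) (by omega), ih ij.2 (by omega) (by omega)]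

theorem unique [IsDomain R] [CharZero R] (hA : HasPowerSums v A) (hB : HasPowerSums v B) :
    A = B :=
  PowerSeries.ext fun r ↦ hA.coeff_eq hB (fun _ _ _ ↦ rfl) r le_rfl

theorem exists_of_field {K : Type*} [Field K] [CharZero K] (v : ℕ → K) :
    ∃ A : K⟦X⟧, HasPowerSums v A := by
  let g : K⟦X⟧ := -PowerSeries.mk fun m ↦ v m / m
  have hg : HasSubst g := HasSubst.of_constantCoeff_zero' (by simp [g])
  have hDg : d⁄dX K g = -PowerSeries.mk fun m ↦ v (m + 1) := by
    ext m
    have : (m : K) + 1 ≠ 0 := Nat.cast_add_one_ne_zero m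
    simp [g, coeff_derivative, this]
  refine ⟨(exp K).subst g, ?_, ?_⟩
  · obtain ⟨e, he⟩ := X_dvd_iff.2 (show constantCoeff (exp K - 1) = 0 by simp)
    rw [← coe_substAlgHom hg, sub_eq_iff_eq_add.1 he, map_add, map_mul, map_one, coe_substAlgHom hg,
      subst_X hg]
    simp [g]
  · rw [derivative_subst hg, derivative_exp, hDg, mul_comm]

theorem tendsto_coeff {K : Type*} [NormedField K] [CharZero K] {v : ℕ → K} {A : K⟦X⟧}
    (hA : HasPowerSums v A) {ι : Type*} {l : Filter ι} {w : ι → ℕ → K} {B : ι → K⟦X⟧}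
    (hB : ∀ i, HasPowerSums (w i) (B i))
    (h : ∀ m, 1 ≤ m → Filter.Tendsto (fun i ↦ w i m) l (nhds (v m))) (r : ℕ) :
    Filter.Tendsto (fun i ↦ coeff r (B i)) l (nhds (coeff r A)) := by
  induction r using Nat.strong_induction_on with
  | _ r ih =>
    rcases r with _ | r
    · simp only [coeff_zero_eq_constantCoeff_apply, hA.constantCoeff_eq_one,
        (hB _).constantCoeff_eq_one]
      exact tendsto_const_nhds
    · have hr : (r : K) + 1 ≠ 0 := Nat.cast_add_one_ne_zero r
      simp only [eq_div_of_mul_eq hr (hA.coeff_succ r), eq_div_of_mul_eq hr ((hB _).coeff_succ r)]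
      refine (tendsto_finsetSum _ fun ij hij ↦ ?_).neg.div_const _
      have := mem_antidiagonal.1 hij
      exact (h _ (Nat.le_add_left 1 _)).mul (ih ij.2 (by omega))

end HasPowerSums

end PowerSums

section Jacobi

variable {R A : Type*} [CommRing R] [CommRing A] [Algebra R A]

theorem derivation_prod (D : Derivation R A A) {ι : Type*} [DecidableEq ι] (s : Finset ι)
    (f : ι → A) : D (∏ i ∈ s, f i) = ∑ i ∈ s, (∏ j ∈ s.erase i, f j) * D (f i) := by
  induction s using Finset.cons_induction with
  | empty => simp
  | cons i s hi ih =>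
    rw [Finset.prod_cons, Finset.sum_cons, Derivation.leibniz, ih, Finset.erase_cons, smul_eq_mul,
      smul_eq_mul, add_comm, Finset.mul_sum]
    congr 1
    refine Finset.sum_congr rfl fun j hj ↦ ?_
    have hij : i ≠ j := fun h ↦ hi (h ▸ hj)
    rw [Finset.erase_cons_of_ne hi hij, Finset.prod_cons, mul_assoc]

variable {n : Type*} [Fintype n] [DecidableEq n]

theorem derivation_det (D : Derivation R A A) (M : Matrix n n A) :
    D M.det = (M.adjugate * M.map D).trace := by
  have hrow (i : n) : (M.adjugate * M.map D) i i = ((M.updateCol i fun j ↦ D (M j i)).det) := by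
    rw [← Matrix.cramer_apply, Matrix.cramer_eq_adjugate_mulVec]
    rfl
  simp only [Matrix.trace, Matrix.diag_apply, hrow]
  simp only [Matrix.det_apply', map_sum, Derivation.leibniz, Derivation.map_intCast,
    derivation_prod, smul_eq_mul, mul_zero, add_zero, Finset.mul_sum]
  rw [Finset.sum_comm]
  refine Finset.sum_congr rfl fun i _ ↦ Finset.sum_congr rfl fun σ _ ↦ ?_
  rw [← Finset.mul_prod_erase _ _ (Finset.mem_univ i), Matrix.updateCol_self, mul_comm (D _)]
  congr 2
  exact Finset.prod_congr rfl fun j hj ↦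
    (Matrix.updateCol_ne (Finset.ne_of_mem_erase hj)).symm

open PowerSeries in
theorem HasPowerSums.det_one_sub_X_smul (U : Matrix n n R) :
    HasPowerSums (fun m ↦ (U ^ m).trace) (1 - (X : R⟦X⟧) • U.map (C (R := R))).det where
  constantCoeff_eq_one := by
    rw [RingHom.map_det]
    have : (constantCoeff (R := R)).mapMatrix (1 - (X : R⟦X⟧) • U.map (C (R := R))) = 1 := by
      ext i j
      rcases eq_or_ne i j with rfl | h <;> simp [*]
    rw [this, Matrix.det_one]
  derivative_eq := by
    set B : Matrix n n R⟦X⟧ := 1 - (X : R⟦X⟧) • U.map (C (R := R)) with hB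
    let W : Matrix n n R⟦X⟧ := Matrix.of fun i j ↦ PowerSeries.mk fun m ↦ (U ^ (m + 1)) i j
    have hDB : B.map (d⁄dX R) = -U.map (C (R := R)) := by
      ext1 i j
      by_cases h : i = j <;> simp [hB, h]
    have hBW : B * W = U.map (C (R := R)) := by
      rw [hB, sub_mul, one_mul, Matrix.smul_mul]
      ext i j (_ | m) <;> rw [Matrix.sub_apply, Matrix.smul_apply, Matrix.mul_apply]
      · simp [W]
      · simp [W, coeff_succ_X_mul, pow_succ' U (m + 1), Matrix.mul_apply]
    have htr : W.trace = PowerSeries.mk fun m ↦ (U ^ (m + 1)).trace := by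
      ext m; simp [W, Matrix.trace, Matrix.diag]
    rw [derivation_det, hDB, ← hBW, mul_neg, ← mul_assoc, Matrix.adjugate_mul, Matrix.smul_mul,
      one_mul, Matrix.trace_neg, Matrix.trace_smul, htr, smul_eq_mul, neg_mul, mul_comm]

end Jacobi

section Evaluation

open PowerSeries Filter Topology

variable {K : Type*} [NormedField K]

/-- The ring of power series which converge absolutely at the point `z`. -/
def convergentAt (z : K) : Subring K⟦X⟧ where
  carrier := {f | Summable fun n ↦ ‖coeff n f * z ^ n‖}
  zero_mem' := by simp [summable_zero]
  one_mem' := summable_of_ne_finset_zero (s := {0}) fun n hn ↦ by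
    simp [coeff_one, Finset.notMem_singleton.1 hn]
  add_mem' {f g} hf hg := .of_nonneg_of_le (fun _ ↦ norm_nonneg _) (fun n ↦ by
    rw [map_add, add_mul]; exact norm_add_le _ _) (hf.add hg)
  neg_mem' {f} hf := by simpa using hf
  mul_mem' {f g} hf hg := by
    refine (summable_norm_sum_mul_antidiagonal_of_summable_norm hf hg).congr fun n ↦ ?_
    rw [coeff_mul, Finset.sum_mul]
    refine congrArg _ (Finset.sum_congr rfl fun ij hij ↦ ?_)
    rw [← Finset.HasAntidiagonal.mem_antidiagonal.1 hij]
    ring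

/-- The value of the power series `f` at `z`, meaningful for `f ∈ convergentAt z`. -/
def evalAt (z : K) (f : K⟦X⟧) : K := ∑' n, coeff n f * z ^ n

variable {z : K} {f g : K⟦X⟧}

theorem mem_convergentAt : f ∈ convergentAt z ↔ Summable fun n ↦ ‖coeff n f * z ^ n‖ := Iff.rfl

theorem rescale_mem_convergentAt {c : K} :
    rescale c f ∈ convergentAt z ↔ f ∈ convergentAt (c * z) := by
  simp only [mem_convergentAt, coeff_rescale, mul_pow, mul_left_comm, mul_assoc]

theorem one_sub_C_mul_X_mem_convergentAt (c : K) : 1 - C c * X ∈ convergentAt z := by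
  refine sub_mem (one_mem _) (mem_convergentAt.2 ?_)
  refine summable_of_ne_finset_zero (s := {1}) fun n hn ↦ ?_
  simp [coeff_X, Finset.notMem_singleton.1 hn]

theorem mem_convergentAt_of_bounded {ρ B : ℝ} (hz : ‖z‖ < ρ)
    (hf : ∀ n, ‖coeff n f‖ * ρ ^ n ≤ B) : f ∈ convergentAt z := by
  have hρ : 0 < ρ := (norm_nonneg z).trans_lt hz
  have hgeom : Summable fun n ↦ B * (‖z‖ / ρ) ^ n :=
    (summable_geometric_of_lt_one (by positivity) ((div_lt_one hρ).2 hz)).mul_left B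
  refine mem_convergentAt.2 (hgeom.of_nonneg_of_le (fun _ ↦ norm_nonneg _) fun n ↦ ?_)
  rw [norm_mul, norm_pow, div_pow, ← mul_div_assoc, le_div_iff₀ (pow_pos hρ n), mul_right_comm]
  exact mul_le_mul_of_nonneg_right (hf n) (by positivity)

theorem evalAt_rescale (c : K) : evalAt z (rescale c f) = evalAt (c * z) f := by
  simp only [evalAt, coeff_rescale, mul_pow, mul_left_comm, mul_assoc]

theorem evalAt_one : evalAt z 1 = 1 := by
  rw [evalAt, tsum_eq_single 0 fun n hn ↦ by simp [coeff_one, hn]]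
  simp

theorem evalAt_one_sub_C_mul_X (c : K) : evalAt z (1 - C c * X) = 1 - c * z := by
  rw [evalAt, tsum_eq_sum (s := {0, 1})]
  · simp [sub_eq_add_neg, coeff_one]
  · intro n hn
    simp only [Finset.mem_insert, Finset.mem_singleton, not_or] at hn
    simp [coeff_one, coeff_X, hn]

variable [CompleteSpace K]

theorem evalAt_mul (hf : f ∈ convergentAt z) (hg : g ∈ convergentAt z) :
    evalAt z (f * g) = evalAt z f * evalAt z g := by
  rw [evalAt, evalAt, evalAt, tsum_mul_tsum_eq_tsum_sum_antidiagonal_of_summable_norm hf hg]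
  refine tsum_congr fun n ↦ ?_
  rw [coeff_mul, Finset.sum_mul]
  refine Finset.sum_congr rfl fun ij hij ↦ ?_
  rw [← Finset.HasAntidiagonal.mem_antidiagonal.1 hij]
  ring

theorem evalAt_prod {ι : Type*} {s : Finset ι} {f : ι → K⟦X⟧}
    (hf : ∀ i ∈ s, f i ∈ convergentAt z) :
    evalAt z (∏ i ∈ s, f i) = ∏ i ∈ s, evalAt z (f i) := by
  induction s using Finset.cons_induction with
  | empty => exact evalAt_one
  | cons i s hi ih =>
    have hs : ∀ j ∈ s, f j ∈ convergentAt z := fun j hj ↦ hf j (Finset.mem_cons_of_mem hj)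
    rw [Finset.prod_cons, Finset.prod_cons, evalAt_mul (hf i (Finset.mem_cons_self i s))
      (prod_mem hs), ih hs]

theorem evalAt_pow (hf : f ∈ convergentAt z) (n : ℕ) : evalAt z (f ^ n) = evalAt z f ^ n := by
  simpa using evalAt_prod (s := Finset.range n) fun _ _ ↦ hf

theorem tendsto_evalAt {ι : Type*} {l : Filter ι} {f : ι → K⟦X⟧} {g : K⟦X⟧} {b : ℕ → ℝ}
    (hb : Summable b) (hfb : ∀ i n, ‖coeff n (f i) * z ^ n‖ ≤ b n)
    (hfg : ∀ n, Tendsto (fun i ↦ coeff n (f i)) l (𝓝 (coeff n g))) :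
    Tendsto (fun i ↦ evalAt z (f i)) l (𝓝 (evalAt z g)) :=
  tendsto_tsum_of_dominated_convergence hb (fun n ↦ (hfg n).mul_const _)
    (Eventually.of_forall fun i ↦ hfb i)

theorem tendsto_evalAt_pow_mul {q : K} (hq : ‖q‖ < 1) (hf : f ∈ convergentAt z) :
    Tendsto (fun i : ℕ ↦ evalAt (q ^ i * z) f) atTop (𝓝 (constantCoeff f)) := by
  have hconst : constantCoeff f = evalAt z (C (constantCoeff f)) := by
    rw [evalAt, tsum_eq_single 0 fun n hn ↦ by simp [coeff_C, hn]]
    simp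
  simp only [← evalAt_rescale]
  rw [hconst]
  refine tendsto_evalAt hf (fun i n ↦ ?_) fun n ↦ ?_
  · rw [coeff_rescale, mul_assoc, norm_mul, norm_pow, norm_pow]
    exact mul_le_of_le_one_left (norm_nonneg _)
      (pow_le_one₀ (by positivity) (pow_le_one₀ (norm_nonneg _) hq.le))
  · rcases n with _ | n
    · simp
    · have hq' : ‖q ^ (n + 1)‖ < 1 := by
        rw [norm_pow]
        exact pow_lt_one₀ (norm_nonneg _) hq n.succ_ne_zero
      simpa only [coeff_rescale, ← pow_mul, mul_comm (n + 1), zero_mul, coeff_succ_C] using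
        (tendsto_pow_atTop_nhds_zero_of_norm_lt_one hq').mul_const (coeff (n + 1) f)

end Evaluation

section PolesFromEntireFunctions

open PowerSeries Filter Topology

variable {K : Type*}

/-- The product of the series `A (q ^ i * T) ^ c i` over the monomials `c i * Y ^ i` of `P`; on
power sums it multiplies the `m`-th one by `P (q ^ m)`. -/
def twist [CommRing K] (q : K) (P : Polynomial ℕ) (A : K⟦X⟧) : K⟦X⟧ :=
  ∏ i ∈ P.support, rescale (q ^ i) A ^ P.coeff i

theorem HasPowerSums.twist [CommRing K] {v : ℕ → K} {A : K⟦X⟧} (hA : HasPowerSums v A) (q : K)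
    (P : Polynomial ℕ) :
    HasPowerSums (fun m ↦ P.aeval (q ^ m) * v m) (HS.twist q P A) := by
  refine (HasPowerSums.prod fun i _ ↦ (hA.rescale (q ^ i)).pow (P.coeff i)).congr fun m _ ↦ ?_
  rw [Polynomial.aeval_def, Polynomial.eval₂_eq_sum, Polynomial.sum, Finset.sum_mul,
    Finset.sum_apply]
  refine Finset.sum_congr rfl fun i _ ↦ ?_
  simp only [Pi.smul_apply, nsmul_eq_mul, eq_natCast, ← pow_mul, mul_comm i m, mul_assoc]

theorem HasPowerSums.prod_one_sub [CommRing K] {ι : Type*} [Fintype ι] (c : ι → K) :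
    HasPowerSums (fun m ↦ ∑ i, c i ^ m) (∏ i, (1 - C (c i) * X)) :=
  (HasPowerSums.prod fun i _ ↦ one_sub_C_mul_X (c i)).congr fun _ _ ↦ Finset.sum_apply _ _ _

theorem exists_one_sub_pow_add_eq (K : Type*) [CommRing K] (M N : ℕ) : ∃ E O : Polynomial ℕ,
    Polynomial.X ^ M ∣ O ∧ ∀ x : K, (1 - x ^ M) ^ N + O.aeval x = E.aeval x := by
  induction N with
  | zero => exact ⟨1, 0, dvd_zero _, by simp⟩
  | succ N ih =>
    obtain ⟨E, O, hO, h⟩ := ih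
    refine ⟨E + Polynomial.X ^ M * O, O + Polynomial.X ^ M * E, hO.add (dvd_mul_right _ _),
      fun x ↦ ?_⟩
    simp only [map_add, map_mul, map_pow, Polynomial.aeval_X, ← h x]
    ring

theorem HasPowerSums.exists_twist_mul_eq [CommRing K] [IsDomain K] [CharZero K] {q : K}
    {u v w : ℕ → K} {A B C : K⟦X⟧} (hA : HasPowerSums v A) (hB : HasPowerSums u B)
    (hC : HasPowerSums w C) {N : ℕ} (h : ∀ m, 1 ≤ m → u m - w m = (1 - q ^ m) ^ N * v m)
    {M : ℕ} (hM : M ≠ 0) :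
    ∃ E O G : Polynomial ℕ, Polynomial.X ^ M ∣ O ∧ G.coeff 0 ≠ 0 ∧
      HS.twist q O A * HS.twist q G B = HS.twist q E A * HS.twist q G C := by
  obtain ⟨E, O, hO, hEO⟩ := exists_one_sub_pow_add_eq K M N
  let G : Polynomial ℕ := (∑ i ∈ Finset.range M, Polynomial.X ^ i) ^ N
  have hG (x : K) : G.aeval x * (1 - x) ^ N = (1 - x ^ M) ^ N := by
    simp [G, ← mul_pow, geom_sum_mul_neg]
  refine ⟨E, O, G, hO, ?_, ?_⟩
  · simp [G, Polynomial.coeff_zero_eq_eval_zero, Polynomial.eval_finsetSum, hM]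
  · refine (((hA.twist q O).mul (hB.twist q G)).congr fun m hm ↦ ?_).unique
      ((hA.twist q E).mul (hC.twist q G))
    simp only [Pi.add_apply, ← hEO, ← hG, sub_eq_iff_eq_add.1 (h m hm)]
    ring

variable [NormedField K] {q z : K} {P : Polynomial ℕ} {A : K⟦X⟧}

theorem twist_mem_convergentAt (hA : ∀ i ∈ P.support, A ∈ convergentAt (q ^ i * z)) :
    twist q P A ∈ convergentAt z :=
  prod_mem fun i hi ↦ pow_mem (rescale_mem_convergentAt.2 (hA i hi)) _

theorem evalAt_twist_eq_zero_iff [CompleteSpace K]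
    (hA : ∀ i ∈ P.support, A ∈ convergentAt (q ^ i * z)) :
    evalAt z (twist q P A) = 0 ↔ ∃ i ∈ P.support, evalAt (q ^ i * z) A = 0 := by
  have hmem (i) (hi : i ∈ P.support) := rescale_mem_convergentAt.2 (hA i hi)
  rw [twist, evalAt_prod fun i hi ↦ pow_mem (hmem i hi) _, Finset.prod_eq_zero_iff]
  refine exists_congr fun i ↦ and_congr_right fun hi ↦ ?_
  rw [evalAt_pow (hmem i hi), evalAt_rescale, pow_eq_zero_iff (Polynomial.mem_support_iff.1 hi)]

theorem prod_one_sub_mem_convergentAt {ι : Type*} [Fintype ι] (c : ι → K) :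
    ∏ i, (1 - C (c i) * X) ∈ convergentAt z :=
  prod_mem fun _ _ ↦ one_sub_C_mul_X_mem_convergentAt _

theorem evalAt_prod_one_sub_eq_zero_iff [CompleteSpace K] {ι : Type*} [Fintype ι] {c : ι → K} :
    evalAt z (∏ i, (1 - C (c i) * X)) = 0 ↔ ∃ i, c i * z = 1 := by
  rw [evalAt_prod fun i _ ↦ one_sub_C_mul_X_mem_convergentAt _, Finset.prod_eq_zero_iff]
  simp only [Finset.mem_univ, true_and, evalAt_one_sub_C_mul_X, sub_eq_zero,
    eq_comm (a := (1 : K))]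

theorem HasPowerSums.exists_forall_evalAt_ne_zero [CompleteSpace K] {v : ℕ → K}
    (hA : HasPowerSums v A) (hz : A ∈ convergentAt z) (hq : ‖q‖ < 1) :
    ∃ M, ∀ i, M ≤ i → evalAt (q ^ i * z) A ≠ 0 := by
  have hlim := tendsto_evalAt_pow_mul hq hz
  rw [hA.constantCoeff_eq_one] at hlim
  exact eventually_atTop.1 (hlim.eventually_ne one_ne_zero)

-- The generating series of the `α i` and the `β j` has the form `A ^ ((1 - q) ^ N)`, where `q` acts
-- by `T ↦ q * T`. Multiplying the exponent by `(1 + q + ⋯ + q ^ (M - 1)) ^ N` gives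
-- `(1 - q ^ M) ^ N`, so that the series in its denominator are `A (q ^ i * T)` with `i ≥ M`, and
-- these do not vanish at `(β j)⁻¹` once `M` is large.
theorem HasPowerSums.exists_eq_pow_mul_of_pole [CharZero K] [CompleteSpace K] {v : ℕ → K}
    (hA : HasPowerSums v A) (hconv : ∀ z, A ∈ convergentAt z) (hq : ‖q‖ < 1) {N : ℕ}
    {ι κ : Type*} [Fintype ι] [Fintype κ] {α : ι → K} {β : κ → K}
    (hps : ∀ m, 1 ≤ m → ∑ i, α i ^ m - ∑ j, β j ^ m = (1 - q ^ m) ^ N * v m)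
    {j : κ} (hβ : β j ≠ 0) (hred : ∀ i, α i ≠ β j) :
    ∃ i m, 0 < m ∧ β j = q ^ m * α i := by
  obtain ⟨M, hM⟩ := hA.exists_forall_evalAt_ne_zero (hconv (β j)⁻¹) hq
  obtain ⟨E, O, G, hO, hG, heq⟩ := hA.exists_twist_mul_eq
    (HasPowerSums.prod_one_sub α) (HasPowerSums.prod_one_sub β) hps M.succ_ne_zero
  have hA_mem (P : Polynomial ℕ) : HS.twist q P A ∈ convergentAt (β j)⁻¹ :=
    twist_mem_convergentAt fun _ _ ↦ hconv _
  have hβ_zero : evalAt (β j)⁻¹ (HS.twist q G (∏ j, (1 - C (β j) * X))) = 0 := by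
    refine (evalAt_twist_eq_zero_iff fun _ _ ↦ prod_one_sub_mem_convergentAt β).2
      ⟨0, Polynomial.mem_support_iff.2 hG, evalAt_prod_one_sub_eq_zero_iff.2 ⟨j, ?_⟩⟩
    rw [pow_zero, one_mul, mul_inv_cancel₀ hβ]
  have hO_ne : evalAt (β j)⁻¹ (HS.twist q O A) ≠ 0 := by
    rw [Ne, evalAt_twist_eq_zero_iff fun _ _ ↦ hconv _]
    rintro ⟨i, hi, h0⟩
    refine Polynomial.mem_support_iff.1 hi (Polynomial.X_pow_dvd_iff.1 hO i (not_le.1 fun h ↦ ?_))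
    exact hM i (M.le_succ.trans h) h0
  have hα_zero : evalAt (β j)⁻¹ (HS.twist q G (∏ i, (1 - C (α i) * X))) = 0 := by
    have hval := congrArg (evalAt (β j)⁻¹) heq
    rw [evalAt_mul (hA_mem O) (twist_mem_convergentAt fun _ _ ↦ prod_one_sub_mem_convergentAt α),
      evalAt_mul (hA_mem E) (twist_mem_convergentAt fun _ _ ↦ prod_one_sub_mem_convergentAt β),
      hβ_zero, mul_zero] at hval
    exact (mul_eq_zero.1 hval).resolve_left hO_ne
  obtain ⟨m, -, h0⟩ :=
    (evalAt_twist_eq_zero_iff fun _ _ ↦ prod_one_sub_mem_convergentAt α).1 hα_zero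
  obtain ⟨i, hi⟩ := evalAt_prod_one_sub_eq_zero_iff.1 h0
  have hij : β j = q ^ m * α i := by
    rw [← mul_assoc, mul_inv_eq_one₀ hβ] at hi
    rw [← hi, mul_comm]
  refine ⟨i, m, Nat.pos_of_ne_zero fun hm ↦ hred i ?_, hij⟩
  rw [hij, hm, pow_zero, one_mul]

end PolesFromEntireFunctions

section ArtinHasse

open PowerSeries

variable {R : Type*} [CommRing R]

theorem one_add_X_mul_derivative_binomialSeries [BinomialRing R] (c : R) :
    (1 + X) * d⁄dX R (binomialSeries R c) = C c * binomialSeries R c := by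
  have hchoose (n : ℕ) : Ring.choose c (n + 1) * (n + 1) = (c - n) * Ring.choose c n := by
    have := Ring.choose_smul_choose c n.le_succ
    simp only [Nat.succ_eq_add_one, Nat.choose_succ_self_right, nsmul_eq_mul, Nat.cast_add,
      Nat.cast_one, Nat.add_sub_cancel_left, Ring.choose_one_right] at this
    linear_combination this
  ext (_ | n)
  · rw [add_mul, one_mul, map_add, coeff_zero_X_mul, coeff_C_mul]
    simp [coeff_derivative, binomialSeries_coeff]
  · rw [add_mul, one_mul, map_add, coeff_succ_X_mul, coeff_C_mul]
    simp only [coeff_derivative, binomialSeries_coeff, smul_eq_mul, mul_one]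
    have := hchoose (n + 1)
    push_cast at this ⊢
    linear_combination this

theorem hasPowerSums_rescale_neg_one_binomialSeries [BinomialRing R] (c : R) :
    HasPowerSums (fun _ ↦ c) (rescale (-1) (binomialSeries R c)) := by
  have hgeom : PowerSeries.mk (fun m ↦ (-1 : R) ^ m) * (1 + X) = 1 := by
    ext (_ | n)
    · simp
    · simp [mul_add, pow_succ, coeff_succ_mul_X]
  have hmk : PowerSeries.mk (fun m ↦ (-1 : R) ^ (m + 1) * c) =
      -(PowerSeries.mk (fun m ↦ (-1 : R) ^ m) * C c) := by
    ext n
    simp [pow_succ]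
  have h : HasPowerSums (fun m ↦ (-1) ^ m * c) (binomialSeries R c) :=
    ⟨binomialSeries_constantCoeff c, by
      rw [hmk, neg_neg, mul_assoc, ← one_add_X_mul_derivative_binomialSeries, ← mul_assoc, hgeom,
        one_mul]⟩
  refine (h.rescale (-1)).congr fun m _ ↦ ?_
  rw [← mul_assoc, ← mul_pow, neg_one_mul, neg_neg, one_pow, one_mul]

theorem HasPowerSums.expand {v : ℕ → R} {A : R⟦X⟧} (hA : HasPowerSums v A) {n : ℕ} (hn : n ≠ 0) :
    HasPowerSums (fun m ↦ if n ∣ m then n * v (m / n) else 0) (PowerSeries.expand n hn A) where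
  constantCoeff_eq_one := by rw [constantCoeff_expand, hA.constantCoeff_eq_one]
  derivative_eq := by
    obtain ⟨k, rfl⟩ := Nat.exists_eq_succ_of_ne_zero hn
    have hmk : PowerSeries.mk (fun m ↦ if k + 1 ∣ m + 1 then ((k + 1 : ℕ) : R) *
          v ((m + 1) / (k + 1)) else 0) =
        PowerSeries.expand (k + 1) hn (PowerSeries.mk fun m ↦ v (m + 1)) *
          (((k + 1 : ℕ) : R⟦X⟧) * X ^ k) := by
      ext m
      rw [mul_left_comm, ← map_natCast (C (R := R)), coeff_C_mul, coeff_mul_X_pow', coeff_mk,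
        coeff_expand]
      by_cases hkm : k ≤ m
      · obtain ⟨l, rfl⟩ := Nat.exists_eq_add_of_le' hkm
        rw [if_pos hkm, Nat.add_sub_cancel, add_assoc l,
          if_congr Nat.dvd_add_self_right rfl rfl, Nat.add_div_right _ k.succ_pos, coeff_mk,
          mul_ite, mul_zero]
      · rw [if_neg hkm, if_neg fun h ↦ hkm (Nat.succ_le_succ_iff.1 (Nat.le_of_dvd m.succ_pos h)),
          mul_zero]
    rw [hmk, expand_apply, derivative_subst (HasSubst.X_pow hn), hA.derivative_eq,
      ← expand_apply _ hn, ← expand_apply _ hn, derivative_pow, derivative_X, mul_one, map_mul,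
      map_neg]
    simp only [Nat.succ_eq_add_one, Nat.add_sub_cancel]
    ring

theorem HasPowerSums.exists_of_approx [IsDomain R] [CharZero R] {v : ℕ → R}
    (h : ∀ M, ∃ w B, HasPowerSums w B ∧ ∀ m, 1 ≤ m → m ≤ M → w m = v m) :
    ∃ A : R⟦X⟧, HasPowerSums v A := by
  choose w B hB hw using h
  have hcoeff {r M : ℕ} (hr : r ≤ M) : coeff r (B r) = coeff r (B M) :=
    (hB r).coeff_eq (hB M) (fun m h1 hm ↦ by rw [hw r m h1 hm, hw M m h1 (hm.trans hr)]) r le_rfl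
  refine ⟨PowerSeries.mk fun r ↦ coeff r (B r), ?_, ?_⟩
  · rw [← coeff_zero_eq_constantCoeff_apply, coeff_mk, coeff_zero_eq_constantCoeff_apply,
      (hB 0).constantCoeff_eq_one]
  · ext r
    rw [coeff_derivative, coeff_mk, (hB (r + 1)).coeff_succ, neg_mul, map_neg, coeff_mul]
    refine congrArg _ (Finset.sum_congr rfl fun ij hij ↦ ?_)
    have := Finset.HasAntidiagonal.mem_antidiagonal.1 hij
    rw [coeff_mk, coeff_mk, hcoeff (show ij.2 ≤ r + 1 by omega), hw _ _ (by omega) (by omega)]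

open ArithmeticFunction ArithmeticFunction.Moebius ArithmeticFunction.zeta in
theorem sum_moebius_divisors_filter_not_dvd {p : ℕ} (hp : p.Prime) {m : ℕ} (hm : m ≠ 0) :
    ∑ n ∈ m.divisors with ¬p ∣ n, μ n = if m ∈ Submonoid.powers p then 1 else 0 := by
  obtain ⟨k, m', hm', rfl⟩ := Nat.exists_eq_pow_mul_and_not_dvd hm p hp.ne_one
  have hdiv : {n ∈ (p ^ k * m').divisors | ¬p ∣ n} = m'.divisors := by
    ext n
    rw [Finset.mem_filter, Nat.mem_divisors, Nat.mem_divisors]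
    refine ⟨fun ⟨⟨hn, _⟩, hpn⟩ ↦ ⟨?_, right_ne_zero_of_mul hm⟩, fun ⟨hn, _⟩ ↦
      ⟨⟨hn.mul_left _, hm⟩, fun hpn ↦ hm' (hpn.trans hn)⟩⟩
    exact (((Nat.Prime.coprime_iff_not_dvd hp).2 hpn).symm.pow_right k).dvd_of_dvd_mul_left hn
  rw [hdiv, ← coe_mul_zeta_apply, moebius_mul_coe_zeta, one_apply]
  refine if_congr ⟨?_, ?_⟩ rfl rfl
  · rintro rfl
    exact ⟨k, (mul_one _).symm⟩
  · rintro ⟨l, hl⟩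
    have hdvd : m' ∣ p ^ l := Dvd.intro_left _ hl.symm
    exact ((hp.coprime_iff_not_dvd.2 hm').symm.pow_right l).eq_one_of_dvd hdvd

-- The Artin–Hasse exponential is the product of the series `(1 - T ^ n) ^ (-μ(n) / n)` over the
-- `n` prime to `p`.
open ArithmeticFunction.Moebius in
theorem exists_artinHasse (p : ℕ) [Fact p.Prime] :
    ∃ A : ℤ_[p]⟦X⟧, HasPowerSums (fun m ↦ if m ∈ Submonoid.powers p then -1 else 0) A := by
  have hp : p.Prime := Fact.out
  refine HasPowerSums.exists_of_approx fun M ↦ ?_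
  let s : Finset ℕ := {n ∈ Finset.Icc 1 M | ¬p ∣ n}
  have hunit (n : ℕ) : ∃ c : ℤ_[p], ¬p ∣ n → n * c = -μ n := by
    by_cases h : p ∣ n
    · exact ⟨0, fun h' ↦ absurd h h'⟩
    · obtain ⟨u, hu⟩ := PadicInt.isUnit_iff.2 (PadicInt.norm_natCast_eq_one_iff.2
        (hp.coprime_iff_not_dvd.2 h))
      exact ⟨↑u⁻¹ * -μ n, fun _ ↦ by rw [← hu, Units.mul_inv_cancel_left]⟩
  choose c hc using hunit
  have hs {n : ℕ} (hn : n ∈ s) : n ≠ 0 := by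
    have := (Finset.mem_Icc.1 (Finset.mem_filter.1 hn).1).1
    omega
  refine ⟨_, _, HasPowerSums.prod (s := s.attach) fun n _ ↦
    (hasPowerSums_rescale_neg_one_binomialSeries (c n)).expand (hs n.2), fun m hm hmM ↦ ?_⟩
  have hdiv : {n ∈ s | n ∣ m} = {n ∈ m.divisors | ¬p ∣ n} := by
    ext n
    simp only [s, Finset.mem_filter, Finset.mem_Icc, Nat.mem_divisors]
    refine ⟨fun ⟨⟨_, hpn⟩, hnm⟩ ↦ ⟨⟨hnm, by omega⟩, hpn⟩, fun ⟨⟨hnm, _⟩, hpn⟩ ↦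
      ⟨⟨⟨Nat.pos_of_dvd_of_pos hnm hm, (Nat.le_of_dvd hm hnm).trans hmM⟩, hpn⟩, hnm⟩⟩
  rw [Finset.sum_apply, Finset.sum_attach s fun n ↦ if n ∣ m then (n : ℤ_[p]) * c n else 0,
    ← Finset.sum_filter, hdiv,
    Finset.sum_congr rfl fun n hn ↦ hc n (Finset.mem_filter.1 hn).2, Finset.sum_neg_distrib,
    ← Int.cast_sum, sum_moebius_divisors_filter_not_dvd hp (by omega)]
  split_ifs <;> simp

end ArtinHasse

section Periodic

open Finset

@[to_additive]
theorem prod_range_add_of_periodic {M : Type*} [CommMonoid M] {u : ℕ → M} {d : ℕ}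
    (hu : Function.Periodic u d) (i : ℕ) :
    ∏ j ∈ range d, u (j + i) = ∏ j ∈ range d, u j := by
  induction i with
  | zero => rfl
  | succ i ih =>
    rw [← ih]
    obtain _ | d := d
    · rfl
    · have hi : u (d + (i + 1)) = u (0 + i) := by
        rw [zero_add, ← hu i, ← add_assoc, add_right_comm, add_comm _ i]
      rw [prod_range_succ, hi, prod_range_succ' fun j ↦ u (j + i)]
      simp only [add_assoc, add_comm 1]

theorem periodic_pow_pow {M : Type*} [Monoid M] {p d : ℕ} {y : M} (hy : y ^ p ^ d = y) :
    Function.Periodic (fun j ↦ y ^ p ^ j) d := fun j ↦ by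
  change y ^ p ^ (j + d) = y ^ p ^ j
  rw [add_comm, pow_add, pow_mul, hy]

end Periodic

section Frobenius

open Polynomial Finset

variable {p : ℕ} [Fact p.Prime] {k : Type*} [Field k]

theorem exists_pow_pow_eq_self [Algebra (ZMod p) k] [Algebra.IsAlgebraic (ZMod p) k] (x : k) :
    ∃ d, d ≠ 0 ∧ x ^ p ^ d = x := by
  let F := IntermediateField.adjoin (ZMod p) {x}
  have : FiniteDimensional (ZMod p) F :=
    IntermediateField.adjoin.finiteDimensional (Algebra.IsIntegral.isIntegral x)
  have : Finite F := Module.finite_of_finite (ZMod p)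
  have := Fintype.ofFinite F
  refine ⟨Module.finrank (ZMod p) F, Module.finrank_pos.ne', ?_⟩
  have hcard : Fintype.card F = p ^ Module.finrank (ZMod p) F := by
    rw [Module.card_eq_pow_finrank (K := ZMod p), ZMod.card]
  rw [← hcard]
  exact congrArg Subtype.val
    (FiniteField.pow_card (⟨x, IntermediateField.mem_adjoin_simple_self _ x⟩ : F))

theorem exists_intCast_eq_of_pow_eq_self [CharP k p] {x : k} (hx : x ^ p = x) :
    ∃ z : ℤ, (z : k) = x := by
  rw [← Subfield.mem_bot_iff_pow_eq_self k p, ← ZMod.fieldRange_castHom_eq_bot p] at hx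
  obtain ⟨z, rfl⟩ := hx
  obtain ⟨z, rfl⟩ := ZMod.intCast_surjective z
  exact ⟨z, (map_intCast _ z).symm⟩

-- The coefficients of the product are fixed by the Frobenius, so they lie in the prime field.
theorem exists_map_eq_prod_X_sub_C_pow [CharP k p] {d : ℕ} {x : k} (hx : x ^ p ^ d = x) :
    ∃ g : ℤ[X], g.map (Int.castRingHom k) = ∏ j ∈ range d, (X - C (x ^ p ^ j)) := by
  have hfix : (∏ j ∈ range d, (X - C (x ^ p ^ j))).map (frobenius k p) =
      ∏ j ∈ range d, (X - C (x ^ p ^ j)) := by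
    simp only [Polynomial.map_prod, Polynomial.map_sub, map_X, map_C, frobenius_def, ← pow_mul,
      ← pow_succ]
    exact prod_range_add_of_periodic ((periodic_pow_pow hx).comp fun y ↦ X - C y) 1
  refine (mem_lifts _).1 ((lifts_iff_coeff_lifts _).2 fun i ↦
    exists_intCast_eq_of_pow_eq_self (p := p) ?_)
  rw [← frobenius_def, ← coeff_map, hfix]

theorem algebraMap_traceZmod {d : ℕ} {x : Omg p} (hx : x ^ p ^ d = x) :
    algebraMap (ZMod p) (Omg p) (traceZmod p d x) = ∑ j ∈ range d, x ^ p ^ j := by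
  refine Function.invFun_eq ?_
  obtain ⟨z, hz⟩ : ∃ z : ℤ, (z : Omg p) = ∑ j ∈ range d, x ^ p ^ j := by
    refine exists_intCast_eq_of_pow_eq_self (p := p) ?_
    rw [← frobenius_def, map_sum]
    simp only [frobenius_def, ← pow_mul, ← pow_succ]
    exact sum_range_add_of_periodic (periodic_pow_pow hx) 1
  exact ⟨z, by rw [map_intCast, hz]⟩

end Frobenius

section Teichmuller

open Polynomial IsLocalRing

variable {O : Type*} [CommRing O] [IsLocalRing O]

theorem isAlgClosed_residueField (hO : ∀ f : O[X], f.Monic → f.Splits) :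
    IsAlgClosed (ResidueField O) := by
  refine IsAlgClosed.of_exists_root _ fun f hf hirr ↦ ?_
  obtain ⟨g, rfl, -, hgm⟩ := lifts_and_natDegree_eq_and_monic
    ((mem_lifts _).2 (Polynomial.map_surjective _ residue_surjective f)) hf
  exact ((hO g hgm).map (residue O)).exists_eval_eq_zero hirr.degree_pos.ne'

variable [IsDomain O]

theorem exists_pow_eq_self_of_residue (hO : ∀ f : O[X], f.Monic → f.Splits) {Q : ℕ} (hQ : 1 < Q)
    {w : ResidueField O} (hw : w ^ Q = w) : ∃ y : O, y ^ Q = y ∧ residue O y = w := by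
  have hmonic : (X ^ Q - X : O[X]).Monic := monic_X_pow_sub (by simpa using hQ)
  have heval := congrArg (Polynomial.eval₂ (residue O) w)
    ((hO _ hmonic).eq_prod_roots_of_monic hmonic)
  rw [eval₂_sub, eval₂_X_pow, eval₂_X, hw, sub_self, eval₂_multiset_prod, eq_comm,
    Multiset.prod_eq_zero_iff, Multiset.map_map, Multiset.mem_map] at heval
  obtain ⟨y, hy, hyw⟩ := heval
  refine ⟨y, ?_, ?_⟩
  · simpa [sub_eq_zero] using isRoot_of_mem_roots hy
  · exact (sub_eq_zero.1 (by simpa using hyw)).symm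

variable {p : ℕ} [CharP (ResidueField O) p]

theorem eq_of_residue_eq_of_pow_eq_self {d : ℕ} (hd : d ≠ 0) {y z : O} (hy : y ^ p ^ d = y)
    (hz : z ^ p ^ d = z) (h : residue O y = residue O z) : y = z := by
  by_contra hne
  have hgeom := (Commute.all y z).geom_sum₂_mul (p ^ d)
  rw [hy, hz] at hgeom
  have hres := congrArg (residue O) (mul_right_cancel₀ (sub_ne_zero.2 hne)
    (hgeom.trans (one_mul _).symm))
  simp [h, geom_sum₂_self, hd, zero_pow] at hres

variable [Fact p.Prime] {k : Type*} [Field k]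

theorem exists_teichmuller [Algebra (ZMod p) k] [Algebra.IsAlgebraic (ZMod p) k]
    (hO : ∀ f : O[X], f.Monic → f.Splits) (ι : k →+* ResidueField O) :
    ∃ τ : k →*₀ O, ∀ x, residue O (τ x) = ι x := by
  have hp : p.Prime := Fact.out
  have hex (x : k) : ∃ y : O, (∃ d, d ≠ 0 ∧ y ^ p ^ d = y) ∧ residue O y = ι x := by
    obtain ⟨d, hd, hx⟩ := exists_pow_pow_eq_self (p := p) x
    obtain ⟨y, hy, hyx⟩ := exists_pow_eq_self_of_residue hO (Nat.one_lt_pow hd hp.one_lt)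
      (show ι x ^ p ^ d = ι x by rw [← map_pow, hx])
    exact ⟨y, ⟨d, hd, hy⟩, hyx⟩
  have huniq {y z : O} (hy : ∃ d, d ≠ 0 ∧ y ^ p ^ d = y) (hz : ∃ d, d ≠ 0 ∧ z ^ p ^ d = z)
      (h : residue O y = residue O z) : y = z := by
    obtain ⟨d, hd, hy⟩ := hy
    obtain ⟨e, he, hz⟩ := hz
    refine eq_of_residue_eq_of_pow_eq_self (p := p) (mul_ne_zero he hd) ?_ ?_ h
    · simpa using (periodic_pow_pow hy).nat_mul_eq e
    · simpa [mul_comm e] using (periodic_pow_pow hz).nat_mul_eq d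
  choose τ hτ hred using hex
  refine ⟨⟨⟨τ, ?_⟩, ?_, fun x y ↦ ?_⟩, hred⟩
  · exact huniq (hτ 0) ⟨1, one_ne_zero, by simp [hp.ne_zero]⟩ (by simp [hred])
  · exact huniq (hτ 1) ⟨1, one_ne_zero, by simp⟩ (by simp [hred])
  · obtain ⟨d, hd, hx⟩ := hτ x
    obtain ⟨e, he, hy⟩ := hτ y
    refine huniq (hτ _) ⟨e * d, mul_ne_zero he hd, ?_⟩ (by simp [hred])
    rw [mul_pow]
    congr 1
    · simpa using (periodic_pow_pow hx).nat_mul_eq e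
    · simpa [mul_comm e] using (periodic_pow_pow hy).nat_mul_eq d

theorem map_eval₂_intCastRingHom {A B : Type*} [CommRing A] [CommRing B] (φ : A →+* B) (y : A)
    (g : ℤ[X]) : φ (g.eval₂ (Int.castRingHom A) y) = g.eval₂ (Int.castRingHom B) (φ y) := by
  rw [hom_eval₂, Subsingleton.elim (φ.comp _)]

variable [CharP k p] {ι : k →+* ResidueField O} {τ : k →*₀ O} {d : ℕ} {x : k}

-- A local endomorphism `σ` acts on the roots in the residue field of the polynomial
-- `∏ j, (X - x ^ p ^ j)`, whose coefficients are integers.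
theorem exists_map_teichmuller_eq_pow (hτ : ∀ x, residue O (τ x) = ι x) (σ : O →+* O)
    [IsLocalHom σ] (hd : d ≠ 0) (hx : x ^ p ^ d = x) : ∃ i, σ (τ x) = τ x ^ p ^ i := by
  obtain ⟨g, hg⟩ := exists_map_eq_prod_X_sub_C_pow (p := p) hx
  have heval (w : ResidueField O) :
      g.eval₂ (Int.castRingHom _) w = ∏ j ∈ Finset.range d, (w - ι x ^ p ^ j) := by
    have := congrArg (eval₂ ι w) hg
    simp only [eval₂_map, eval₂_finsetProd, eval₂_sub, eval₂_X, eval₂_C] at this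
    simp only [map_pow] at this
    rw [← this, Subsingleton.elim (ι.comp _)]
  have hτx : g.eval₂ (Int.castRingHom O) (τ x) ∈ maximalIdeal O := by
    rw [← residue_eq_zero_iff, map_eval₂_intCastRingHom, heval, hτ]
    exact Finset.prod_eq_zero (Finset.mem_range.2 (Nat.pos_of_ne_zero hd)) (by simp)
  have hστx : g.eval₂ (Int.castRingHom O) (σ (τ x)) ∈ maximalIdeal O := by
    rw [← map_eval₂_intCastRingHom]
    exact map_nonunit σ _ hτx
  rw [← residue_eq_zero_iff, map_eval₂_intCastRingHom, heval, Finset.prod_eq_zero_iff] at hστx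
  obtain ⟨i, -, hi⟩ := hστx
  refine ⟨i, eq_of_residue_eq_of_pow_eq_self (p := p) hd ?_ ?_ ?_⟩
  · rw [← map_pow, ← map_pow, hx]
  · rw [← map_pow, ← map_pow, pow_right_comm, hx]
  · rw [map_pow, hτ]
    exact sub_eq_zero.1 hi

theorem map_sum_teichmuller_pow (hτ : ∀ x, residue O (τ x) = ι x) (σ : O →+* O)
    [IsLocalHom σ] (hx : x ^ p ^ d = x) :
    σ (∑ j ∈ Finset.range d, τ x ^ p ^ j) = ∑ j ∈ Finset.range d, τ x ^ p ^ j := by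
  obtain rfl | hd := eq_or_ne d 0
  · simp
  · obtain ⟨i, hi⟩ := exists_map_teichmuller_eq_pow hτ σ hd hx
    simp only [map_sum, map_pow, hi, ← pow_mul, ← pow_add]
    simp only [add_comm i]
    exact sum_range_add_of_periodic (periodic_pow_pow (by rw [← map_pow, hx])) i

end Teichmuller

section UnitBall

open Polynomial IsLocalRing

variable (L : Type*) [NormedField L] [IsUltrametricDist L]

/-- The closed unit ball of an ultrametric normed field, as a valuation ring. -/
abbrev unitBall : ValuationSubring L := (NormedField.valuation (K := L)).valuationSubring

variable {L}

theorem mem_unitBall {x : L} : x ∈ unitBall L ↔ ‖x‖ ≤ 1 := Iff.rfl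

theorem isUnit_unitBall_iff {x : unitBall L} : IsUnit x ↔ ‖(x : L)‖ = 1 := by
  refine (Valuation.integer.integers
    (NormedField.valuation (K := L))).isUnit_iff_valuation_eq_one.trans ?_
  change ‖(x : L)‖₊ = 1 ↔ _
  rw [← NNReal.coe_inj, coe_nnnorm, NNReal.coe_one]

theorem residue_unitBall_eq_zero_iff {x : unitBall L} :
    residue (unitBall L) x = 0 ↔ ‖(x : L)‖ < 1 := by
  rw [residue_eq_zero_iff, mem_maximalIdeal, mem_nonunits_iff, isUnit_unitBall_iff]
  exact ⟨fun h ↦ lt_of_le_of_ne (mem_unitBall.1 x.2) h, fun h ↦ h.ne⟩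

theorem charP_residueField_unitBall {p : ℕ} [Fact p.Prime] (hp : ‖(p : L)‖ < 1) :
    CharP (ResidueField (unitBall L)) p := by
  refine (CharP.charP_iff_prime_eq_zero Fact.out).2 ?_
  rw [← map_natCast (residue (unitBall L)), residue_unitBall_eq_zero_iff]
  exact_mod_cast hp

theorem norm_sub_one_lt_one_of_pow_eq_one {p : ℕ} [Fact p.Prime] (hp : ‖(p : L)‖ < 1) {ζ : L}
    (hζ : ζ ^ p = 1) : ‖ζ - 1‖ < 1 := by
  have := charP_residueField_unitBall hp
  have hp0 : p ≠ 0 := (Fact.out : p.Prime).ne_zero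
  have hnorm : ‖ζ‖ = 1 := by
    rw [← pow_eq_one_iff_of_nonneg (norm_nonneg _) hp0, ← norm_pow, hζ, norm_one]
  let z : unitBall L := ⟨ζ, hnorm.le⟩
  have hz : (residue (unitBall L) (z - 1)) ^ p = 0 := by
    rw [map_sub, sub_pow_char, ← map_pow, show z ^ p = 1 from Subtype.ext hζ, map_one, one_pow,
      sub_self]
  exact residue_unitBall_eq_zero_iff.1 ((pow_eq_zero_iff hp0).1 hz)

theorem splits_of_monic_unitBall [IsAlgClosed L] {f : (unitBall L)[X]} (hf : f.Monic) :
    f.Splits := by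
  refine Splits.of_splits_map_of_injective (i := (unitBall L).subtype) Subtype.val_injective
    (IsAlgClosed.splits _) fun a ha ↦ ?_
  have ha : IsIntegral (unitBall L) a := ⟨f, hf, by
    rw [← eval_map]
    exact isRoot_of_mem_roots ha⟩
  exact ⟨⟨a, (Valuation.integer.integers (NormedField.valuation (K := L))).mem_of_integral ha⟩, rfl⟩

end UnitBall

section TeichmullerTrace

open IsLocalRing

variable {p : ℕ} [Fact p.Prime]

theorem norm_natCast_prime_padicAlgCl_lt_one : ‖(p : PadicAlgCl p)‖ < 1 := by
  rw [← map_natCast (algebraMap ℚ_[p] (PadicAlgCl p)), PadicAlgCl.norm_extends]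
  exact Padic.norm_p_lt_one

theorem norm_padicAlgCl_algEquiv (σ : Gal(PadicAlgCl p/ℚ_[p])) (y : PadicAlgCl p) :
    ‖σ y‖ = ‖y‖ := by
  rw [← PadicAlgCl.spectralNorm_eq, ← PadicAlgCl.spectralNorm_eq]
  exact (spectralNorm_eq_of_equiv σ y).symm

theorem exists_padicInt_of_forall_map_eq (T : unitBall (PadicAlgCl p))
    (hT : ∀ (σ : unitBall (PadicAlgCl p) →+* unitBall (PadicAlgCl p)) [IsLocalHom σ], σ T = T) :
    ∃ t : ℤ_[p], algebraMap ℚ_[p] (PadicAlgCl p) t = T := by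
  have hfix (σ : Gal(PadicAlgCl p/ℚ_[p])) : σ (T : PadicAlgCl p) = T := by
    let σ' : unitBall (PadicAlgCl p) →+* unitBall (PadicAlgCl p) :=
      (σ : PadicAlgCl p →+* PadicAlgCl p).restrict _ _ fun y hy ↦
        mem_unitBall.2 ((norm_padicAlgCl_algEquiv σ y).trans_le hy)
    have : IsLocalHom σ' := ⟨fun y hy ↦ isUnit_unitBall_iff.2
      ((norm_padicAlgCl_algEquiv σ y).symm.trans (isUnit_unitBall_iff.1 hy))⟩
    exact congrArg Subtype.val (hT σ')
  obtain ⟨t, ht⟩ := IntermediateField.mem_bot.1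
    ((InfiniteGalois.mem_bot_iff_fixed (k := ℚ_[p]) (T : PadicAlgCl p)).2 hfix)
  exact ⟨⟨t, by rw [← PadicAlgCl.norm_extends p t]; exact ht ▸ T.2⟩, ht⟩

theorem toZMod_eq_toZMod_iff_norm_sub_lt_one {x y : ℤ_[p]} :
    PadicInt.toZMod x = PadicInt.toZMod y ↔ ‖x - y‖ < 1 := by
  rw [← sub_eq_zero, ← map_sub, ← RingHom.mem_ker, PadicInt.ker_toZMod,
    IsLocalRing.mem_maximalIdeal, PadicInt.mem_nonunits]

theorem toZMod_eq_of_residue_eq {t : ℤ_[p]} {T : unitBall (PadicAlgCl p)}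
    (ht : algebraMap ℚ_[p] (PadicAlgCl p) t = T) {z : ℤ}
    (hz : residue (unitBall (PadicAlgCl p)) T = z) : PadicInt.toZMod t = z := by
  rw [← map_intCast (residue (unitBall (PadicAlgCl p))), ← sub_eq_zero, ← map_sub,
    residue_unitBall_eq_zero_iff] at hz
  have hlt : ‖algebraMap ℚ_[p] (PadicAlgCl p) (t - z)‖ < 1 := by
    rw [map_sub, ht, map_intCast]
    exact_mod_cast hz
  rw [← map_intCast PadicInt.toZMod, toZMod_eq_toZMod_iff_norm_sub_lt_one, PadicInt.norm_def,
    PadicInt.coe_sub, PadicInt.coe_intCast, ← PadicAlgCl.norm_extends]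
  exact hlt

theorem exists_teichmuller_trace (p : ℕ) [Fact p.Prime] :
    ∃ τ : Omg p →*₀ unitBall (PadicAlgCl p), Function.Injective τ ∧
      ∀ d x, x ^ p ^ d = x → ∃ t : ℤ_[p], PadicInt.toZMod t = traceZmod p d x ∧
        algebraMap ℚ_[p] (PadicAlgCl p) t =
          ∑ j ∈ Finset.range d, (τ x : PadicAlgCl p) ^ p ^ j := by
  have hO {f : Polynomial (unitBall (PadicAlgCl p))} (hf : f.Monic) : f.Splits :=
    splits_of_monic_unitBall hf
  have := charP_residueField_unitBall (norm_natCast_prime_padicAlgCl_lt_one (p := p))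
  have := isAlgClosed_residueField fun _ ↦ hO
  let _ : Algebra (ZMod p) (ResidueField (unitBall (PadicAlgCl p))) := ZMod.algebra _ p
  let ι : Omg p →+* ResidueField (unitBall (PadicAlgCl p)) :=
    (IsAlgClosed.lift : Omg p →ₐ[ZMod p] ResidueField (unitBall (PadicAlgCl p))).toRingHom
  obtain ⟨τ, hτ⟩ := exists_teichmuller (p := p) (fun _ ↦ hO) ι
  refine ⟨τ, fun x y hxy ↦ ι.injective (by rw [← hτ, ← hτ, hxy]), fun d x hx ↦ ?_⟩
  obtain ⟨t, ht⟩ := exists_padicInt_of_forall_map_eq (∑ j ∈ Finset.range d, τ x ^ p ^ j)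
    fun σ _ ↦ map_sum_teichmuller_pow hτ σ hx
  refine ⟨t, ?_, ht.trans (by push_cast; rfl)⟩
  obtain ⟨z, hz⟩ := ZMod.intCast_surjective (traceZmod p d x)
  rw [← hz]
  refine toZMod_eq_of_residue_eq ht ?_
  simp only [map_sum, map_pow, hτ]
  simp only [← map_pow, ← map_sum, ← algebraMap_traceZmod hx, ← hz, map_intCast]

end TeichmullerTrace

section SplittingFunction

open PowerSeries Filter Topology

variable {K : Type*} [NormedField K]

theorem mem_convergentAt_of_norm_coeff_le_one {A : K⟦X⟧} (hA : ∀ n, ‖coeff n A‖ ≤ 1) {z : K}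
    (hz : ‖z‖ < 1) : A ∈ convergentAt z :=
  mem_convergentAt_of_bounded hz fun n ↦ by simpa using hA n

variable [IsUltrametricDist K]

theorem norm_pow_sub_pow_le {y z : K} {δ : ℝ} (hδ : δ ≤ 1) (hy : ‖y‖ ≤ δ) (hz : ‖z‖ ≤ δ) {n : ℕ}
    (hn : 2 ≤ n) : ‖y ^ n - z ^ n‖ ≤ δ * ‖y - z‖ := by
  have hδ0 : 0 ≤ δ := (norm_nonneg y).trans hy
  rw [← (Commute.all y z).geom_sum₂_mul, norm_mul]
  refine mul_le_mul_of_nonneg_right ?_ (norm_nonneg _)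
  refine IsUltrametricDist.norm_sum_le_of_forall_le_of_nonneg hδ0 fun i hi ↦ ?_
  rw [norm_mul, norm_pow, norm_pow]
  calc ‖y‖ ^ i * ‖z‖ ^ (n - 1 - i) ≤ δ ^ i * δ ^ (n - 1 - i) := by gcongr
    _ = δ ^ (n - 1) := by
      rw [← pow_add, Nat.add_sub_of_le (Nat.le_sub_one_of_lt (Finset.mem_range.1 hi))]
    _ ≤ δ := pow_le_of_le_one hδ0 hδ (by omega)

variable [CompleteSpace K] {A : K⟦X⟧}

theorem norm_sub_sub_evalAt_sub_le (hA : ∀ n, ‖coeff n A‖ ≤ 1) (hA1 : coeff 1 A = 1) {y z : K}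
    {δ : ℝ} (hδ : δ < 1) (hy : ‖y‖ ≤ δ) (hz : ‖z‖ ≤ δ) :
    ‖(y - z) - (evalAt y A - evalAt z A)‖ ≤ δ * ‖y - z‖ := by
  have hδ0 : 0 ≤ δ := (norm_nonneg y).trans hy
  have hsum {w : K} (hw : ‖w‖ ≤ δ) : HasSum (fun n ↦ coeff n A * w ^ n) (evalAt w A) :=
    (mem_convergentAt_of_norm_coeff_le_one hA (hw.trans_lt hδ)).of_norm.hasSum
  have hlin : HasSum (fun n ↦ if n = 1 then y - z else 0) (y - z) := hasSum_ite_eq 1 _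
  rw [← (hlin.sub ((hsum hy).sub (hsum hz))).tsum_eq]
  refine IsUltrametricDist.norm_tsum_le_of_forall_le_of_nonneg (by positivity) fun n ↦ ?_
  match n with
  | 0 => simpa using by positivity
  | 1 => simpa [hA1] using by positivity
  | n + 2 =>
    rw [if_neg (by omega), zero_sub, norm_neg, ← mul_sub, norm_mul]
    exact (mul_le_of_le_one_left (norm_nonneg _) (hA _)).trans
      (norm_pow_sub_pow_le hδ.le hy hz (by omega))

theorem exists_evalAt_eq (hA : ∀ n, ‖coeff n A‖ ≤ 1) (hA1 : coeff 1 A = 1) {c : K}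
    (hc : ‖c - constantCoeff A‖ < 1) :
    ∃ z, ‖z‖ < 1 ∧ evalAt z A = c := by
  set δ := ‖c - constantCoeff A‖
  have hδ0 : 0 ≤ δ := norm_nonneg _
  let g (y : K) : K := y + c - evalAt y A
  have hdiff {y z : K} (hy : ‖y‖ ≤ δ) (hz : ‖z‖ ≤ δ) : ‖g y - g z‖ ≤ δ * ‖y - z‖ := by
    rw [show g y - g z = (y - z) - (evalAt y A - evalAt z A) by simp only [g]; ring]
    exact norm_sub_sub_evalAt_sub_le hA hA1 hc hy hz
  have hg0 : g 0 = c - constantCoeff A := by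
    simp only [g, zero_add, evalAt]
    rw [tsum_eq_single 0 fun n hn ↦ by rw [zero_pow hn, mul_zero], pow_zero, mul_one,
      coeff_zero_eq_constantCoeff_apply]
  have hmaps : Set.MapsTo g (Metric.closedBall 0 δ) (Metric.closedBall 0 δ) := by
    intro y hy
    rw [mem_closedBall_zero_iff] at hy ⊢
    rw [← sub_add_cancel (g y) (g 0)]
    refine (IsUltrametricDist.norm_add_le_max _ _).trans (max_le ?_ (congrArg norm hg0).le)
    have := hdiff hy (z := 0) (by simpa using hδ0)
    rw [sub_zero] at this
    exact this.trans ((mul_le_of_le_one_left (norm_nonneg y) hc.le).trans hy)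
  have hcontr : ContractingWith ⟨δ, hδ0⟩ (hmaps.restrict g _ _) := by
    refine ⟨by exact_mod_cast hc, LipschitzWith.of_dist_le_mul fun y z ↦ ?_⟩
    rw [Subtype.dist_eq, Subtype.dist_eq, dist_eq_norm, dist_eq_norm]
    exact hdiff (mem_closedBall_zero_iff.1 y.2) (mem_closedBall_zero_iff.1 z.2)
  obtain ⟨z, hz, hfix, -⟩ := hcontr.exists_fixedPoint' Metric.isClosed_closedBall.isComplete hmaps
    (x := 0) (by simpa using hδ0) (edist_ne_top _ _)
  have hgz : z + c - evalAt z A = z := hfix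
  exact ⟨z, (mem_closedBall_zero_iff.1 hz).trans_lt hc, by linear_combination -hgz⟩

end SplittingFunction

section DworkSplitting

open PowerSeries Filter Topology

theorem HasPowerSums.prod_rescale_artinHasse {R : Type*} [CommRing R] {A : R⟦X⟧} {y : R}
    {d p : ℕ} (hA : HasPowerSums (fun m ↦ if m ∈ Submonoid.powers p then -1 else 0) A)
    (hy : y ^ p ^ d = y) :
    HasPowerSums
      (fun m ↦ (∑ j ∈ Finset.range d, y ^ p ^ j) * if m ∈ Submonoid.powers p then -1 else 0)
      (∏ j ∈ Finset.range d, PowerSeries.rescale (y ^ p ^ j) A) := by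
  refine (HasPowerSums.prod fun j _ ↦ hA.rescale (y ^ p ^ j)).congr fun m _ ↦ ?_
  rw [Finset.sum_apply, ← Finset.sum_mul]
  split_ifs with hm
  · obtain ⟨k, rfl⟩ := hm
    simp only [← pow_mul, ← pow_add]
    rw [sum_range_add_of_periodic (periodic_pow_pow hy) k]
  · simp

variable {p : ℕ} [Fact p.Prime] {K : Type*} [NormedField K] [IsUltrametricDist K]
  [CompleteSpace K] [CharZero K] {i : ℤ_[p] →+* K}

theorem evalAt_eq_addChar (hi : ∀ x, ‖i x‖ = ‖x‖) {χ : AddChar (ZMod p) K} {v : ℕ → ℤ_[p]}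
    {A : ℤ_[p]⟦X⟧} (hA : HasPowerSums v A) {z : K} (hz : ‖z‖ < 1) (hχ : evalAt z (A.map i) = χ 1)
    {t : ℤ_[p]} {B : K⟦X⟧} (hB : HasPowerSums (fun m ↦ i t * i (v m)) B) :
    evalAt z B = χ (PadicInt.toZMod t) := by
  let l : Filter ℕ := comap Nat.cast (𝓝 t)
  have : l.NeBot := comap_neBot fun s hs ↦ by
    obtain ⟨_, hs, k, rfl⟩ := mem_closure_iff_nhds.1 (PadicInt.denseRange_natCast t) s hs
    exact ⟨k, hs⟩
  have hl : Tendsto (fun n : ℕ ↦ (n : ℤ_[p])) l (𝓝 t) := tendsto_comap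
  have hcont : Continuous i := (AddMonoidHomClass.isometry_of_norm i hi).continuous
  have hnorm n k : ‖coeff n (A.map i ^ k)‖ ≤ 1 := by
    rw [← map_pow, coeff_map, hi]
    exact PadicInt.norm_le_one _
  have hlim : Tendsto (fun k : ℕ ↦ evalAt z (A.map i ^ k)) l (𝓝 (evalAt z B)) := by
    refine tendsto_evalAt (summable_geometric_of_lt_one (norm_nonneg z) hz) (fun k n ↦ ?_)
      (hB.tendsto_coeff (fun k ↦ (hA.map i).pow k) fun m _ ↦ ?_)
    · rw [norm_mul, norm_pow]
      exact mul_le_of_le_one_left (by positivity) (hnorm n k)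
    · simpa [nsmul_eq_mul] using ((hcont.tendsto t).comp hl).mul_const (i (v m))
  refine tendsto_nhds_unique hlim (tendsto_const_nhds.congr' ?_)
  filter_upwards [hl.eventually (Metric.ball_mem_nhds t one_pos)] with k hk
  rw [evalAt_pow (mem_convergentAt_of_norm_coeff_le_one (by simpa using (hnorm · 1)) hz), hχ,
    ← AddChar.map_nsmul_eq_pow, nsmul_one, ← map_natCast PadicInt.toZMod]
  rw [dist_eq_norm] at hk
  rw [toZMod_eq_toZMod_iff_norm_sub_lt_one.2 hk]

theorem exists_splittingSeries (hi : ∀ x, ‖i x‖ = ‖x‖) (χ : AddChar (ZMod p) K) :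
    ∃ (E : K⟦X⟧) (κ : ℝ), 0 < κ ∧ κ < 1 ∧ (∀ n, ‖coeff n E‖ ≤ κ ^ n) ∧
      ∀ (d : ℕ) (y : K) (t : ℤ_[p]), y ^ p ^ d = y → ‖y‖ ≤ 1 →
        i t = ∑ j ∈ Finset.range d, y ^ p ^ j →
          χ (PadicInt.toZMod t) = ∏ j ∈ Finset.range d, evalAt (y ^ p ^ j) E := by
  obtain ⟨A, hA⟩ := exists_artinHasse p
  have hnorm n : ‖coeff n (A.map i)‖ ≤ 1 := by
    rw [coeff_map, hi]
    exact PadicInt.norm_le_one _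
  have hp : ‖(p : K)‖ < 1 := by
    rw [← map_natCast i, hi]
    rw [PadicInt.norm_p]
    exact inv_lt_one_of_one_lt₀ (by exact_mod_cast (Fact.out : p.Prime).one_lt)
  have hχ : ‖χ 1 - 1‖ < 1 := norm_sub_one_lt_one_of_pow_eq_one hp (by
    rw [← AddChar.map_nsmul_eq_pow, nsmul_one, CharP.cast_eq_zero, AddChar.map_zero_eq_one])
  obtain ⟨z, hz, hzχ⟩ := exists_evalAt_eq hnorm
    (by simpa [one_mem, hA.constantCoeff_eq_one] using (hA.map i).coeff_succ 0) (c := χ 1)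
    (by rwa [(hA.map i).constantCoeff_eq_one])
  refine ⟨rescale z (A.map i), (1 + ‖z‖) / 2, by positivity, by linarith, fun n ↦ ?_, ?_⟩
  · rw [coeff_rescale, norm_mul, norm_pow]
    refine (mul_le_of_le_one_right (by positivity) (hnorm n)).trans ?_
    gcongr
    linarith
  · intro d y t hy hy1 ht
    have hB := HasPowerSums.prod_rescale_artinHasse (A := A.map i)
      ((hA.map i).congr fun m _ ↦ by split_ifs <;> simp) hy
    rw [← evalAt_eq_addChar hi hA hz hzχ (hB.congr fun m _ ↦ by rw [ht]; split_ifs <;> simp),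
      evalAt_prod fun j _ ↦ ?_]
    · simp only [evalAt_rescale, mul_comm z]
    · refine rescale_mem_convergentAt.2 (mem_convergentAt_of_norm_coeff_le_one hnorm ?_)
      rw [norm_mul, norm_pow]
      exact (mul_le_of_le_one_left (norm_nonneg z) (pow_le_one₀ (norm_nonneg y) hy1)).trans_lt hz

end DworkSplitting

theorem exists_teichmuller_splittingSeries (p : ℕ) [Fact p.Prime] (χ : AddChar (ZMod p) ℂ_[p]) :
    ∃ (τ : Omg p →*₀ ℂ_[p]) (E : PowerSeries ℂ_[p]) (κ : ℝ), Function.Injective τ ∧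
      (∀ x, ‖τ x‖ ≤ 1) ∧ 0 < κ ∧ κ < 1 ∧ (∀ n, ‖PowerSeries.coeff n E‖ ≤ κ ^ n) ∧
      ∀ (d : ℕ) (x : Omg p), x ^ p ^ d = x →
        χ (traceZmod p d x) = ∏ j ∈ Finset.range d, evalAt (τ x ^ p ^ j) E := by
  obtain ⟨τ, hτ, htrace⟩ := exists_teichmuller_trace p
  let f : PadicAlgCl p →+* ℂ_[p] := algebraMap (PadicAlgCl p) ℂ_[p]
  let i : ℤ_[p] →+* ℂ_[p] := f.comp ((algebraMap ℚ_[p] (PadicAlgCl p)).comp PadicInt.Coe.ringHom)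
  obtain ⟨E, κ, hκ0, hκ1, hE, hsplit⟩ := exists_splittingSeries (i := i)
    (fun x ↦ PadicComplex.norm_extends' p x) χ
  let τ' : Omg p →*₀ ℂ_[p] :=
    (f.comp (unitBall (PadicAlgCl p)).subtype).toMonoidWithZeroHom.comp τ
  have hτ' x : ‖τ' x‖ ≤ 1 := (PadicComplex.norm_extends p _).trans_le (τ x).2
  refine ⟨τ', E, κ, (f.injective.comp Subtype.val_injective).comp hτ, hτ', hκ0, hκ1, hE, ?_⟩
  intro d x hx
  obtain ⟨t, ht, htx⟩ := htrace d x hx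
  rw [← ht]
  refine hsplit d (τ' x) t (by rw [← map_pow, hx]) (hτ' x) ?_
  refine (congrArg f htx).trans ?_
  simp only [map_sum, map_pow]
  rfl

section DworkTraceFormula

open AddMonoidAlgebra

/-- The Laurent polynomials over `K` in the variables indexed by `ι`. -/
abbrev Laurent (K ι : Type*) [Field K] := AddMonoidAlgebra K (ι → ℤ)

variable {K ι : Type*} [Field K]

/-- The substitution `x ↦ x ^ q` on Laurent polynomials. -/
def expandHom (q : ℕ) : Laurent K ι →+* Laurent K ι :=
  mapDomainRingHom K (DistribSMul.toAddMonoidHom (ι → ℤ) q)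

theorem expandHom_single (q : ℕ) (u : ι → ℤ) (c : K) :
    expandHom q (single u c) = single (q • u) c := by
  simp [expandHom]

theorem coeff_mul_expandHom (q : ℕ) (F G : Laurent K ι) (k : ι → ℤ) :
    (F * expandHom q G).coeff k = ∑ᶠ w, F.coeff (k - q • w) * G.coeff w := by
  have hsum : (F * expandHom q G).coeff k = G.coeff.sum fun w c ↦ F.coeff (k - q • w) * c := by
    induction G using AddMonoidAlgebra.induction_linear with
    | zero => simp
    | add x y hx hy =>
      rw [map_add, mul_add, coeff_add, coeff_add, Finsupp.add_apply, hx, hy,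
        Finsupp.sum_add_index'] <;> simp [mul_add]
    | single u c =>
      rw [expandHom_single, coeff_mul_single_apply, coeff_single, Finsupp.sum_single_index
        (mul_zero _), sub_eq_add_neg]
  rw [hsum, Finsupp.sum, finsum_eq_sum_of_support_subset]
  intro w hw
  exact Finsupp.mem_support_iff.2 (right_ne_zero_of_mul hw)

/-- The product `F(x) F(x ^ q) ⋯ F(x ^ (q ^ (m - 1)))`. -/
def frobeniusProd (q : ℕ) (F : Laurent K ι) : ℕ → Laurent K ι
  | 0 => 1
  | m + 1 => F * expandHom q (frobeniusProd q F m)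

variable [Fintype ι]

variable (ι) in
/-- The exponent vectors all of whose entries have absolute value at most `R`. -/
def box (R : ℕ) : Finset (ι → ℤ) := Fintype.piFinset fun _ ↦ Finset.Icc (-(R : ℤ)) R

theorem mem_box {R : ℕ} {u : ι → ℤ} : u ∈ box ι R ↔ ∀ i, |u i| ≤ R := by
  simp [box, Fintype.mem_piFinset, abs_le]

theorem exists_support_subset_box (F : Laurent K ι) : ∃ R, F.coeff.support ⊆ box ι R := by
  refine ⟨∑ u ∈ F.coeff.support, ∑ i, (u i).natAbs, fun u hu ↦ mem_box.2 fun i ↦ ?_⟩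
  have hi := Finset.single_le_sum_of_canonicallyOrdered (f := fun i ↦ (u i).natAbs)
    (Finset.mem_univ i)
  have hu := Finset.single_le_sum_of_canonicallyOrdered
    (f := fun u : ι → ℤ ↦ ∑ i, (u i).natAbs) hu
  rw [Int.abs_eq_natAbs]
  exact_mod_cast hi.trans hu

variable {q R : ℕ} {F : Laurent K ι}

theorem support_frobeniusProd_subset (hq : 2 ≤ q) (hF : F.coeff.support ⊆ box ι R) (m : ℕ) :
    (frobeniusProd q F m).coeff.support ⊆ box ι (R * (q ^ m - 1)) := by
  intro k hk
  refine mem_box.2 fun i ↦ ?_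
  have hbound : |k i| + R ≤ R * (q : ℤ) ^ m := by
    rw [Finsupp.mem_support_iff] at hk
    induction m generalizing k with
    | zero =>
      rw [frobeniusProd, one_def, coeff_single, Finsupp.single_apply_ne_zero] at hk
      simp [hk.1]
    | succ m ih =>
      rw [frobeniusProd, coeff_mul_expandHom] at hk
      obtain ⟨w, hw⟩ := not_forall.1 fun h ↦ hk (finsum_eq_zero_of_forall_eq_zero h)
      have hw_le := ih (right_ne_zero_of_mul hw)
      have hk_le := mem_box.1 (hF (Finsupp.mem_support_iff.2 (left_ne_zero_of_mul hw))) i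
      have habs : |k i| ≤ |(k - q • w) i| + q * |w i| := by
        calc |k i| = |(k - q • w) i + q * w i| := by simp
          _ ≤ _ := (abs_add_le _ _).trans (by rw [abs_mul, Nat.abs_cast])
      rw [pow_succ]
      nlinarith
  rw [Nat.cast_mul, Nat.cast_sub (Nat.one_le_pow _ _ (by omega)), mul_sub]
  push_cast
  linarith

/-- The matrix of Dwork's operator `G ↦ ψ_q (F * G)` on the span of the monomials with exponent in
`box ι R`, where `ψ_q` is the left inverse of `expandHom q` that discards the monomials whose
exponent is not divisible by `q`. -/
def dworkMatrix (q : ℕ) (F : Laurent K ι) (R : ℕ) : Matrix (box ι R) (box ι R) K :=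
  fun u v ↦ F.coeff (q • u.1 - v.1)

theorem dworkMatrix_pow_apply (hq : 2 ≤ q) (hF : F.coeff.support ⊆ box ι R) (m : ℕ)
    (u v : box ι R) :
    (dworkMatrix q F R ^ m) u v = (frobeniusProd q F m).coeff (q ^ m • u.1 - v.1) := by
  induction m generalizing v with
  | zero =>
    simp only [pow_zero, frobeniusProd, Matrix.one_apply, one_def, coeff_single,
      Finsupp.single_apply]
    refine if_congr ?_ rfl rfl
    rw [one_smul, eq_comm (a := (0 : ι → ℤ)), sub_eq_zero, Subtype.ext_iff]
  | succ m ih =>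
    have hsub w : q ^ (m + 1) • u.1 - v.1 - q • (q ^ m • u.1 - w) = q • w - v.1 := by
      rw [smul_sub, smul_smul, ← pow_succ']
      abel
    rw [pow_succ, Matrix.mul_apply, frobeniusProd, coeff_mul_expandHom,
      ← finsum_comp_equiv (Equiv.subLeft (q ^ m • u.1))]
    simp only [Equiv.subLeft_apply, hsub]
    rw [finsum_eq_sum_of_support_subset (s := box ι R), ← Finset.sum_coe_sort (box ι R)]
    · refine Finset.sum_congr rfl fun w _ ↦ ?_
      rw [ih w, mul_comm, dworkMatrix]
    · intro w hw
      refine mem_box.2 fun i ↦ ?_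
      have hw_le := mem_box.1 (hF (Finsupp.mem_support_iff.2 (left_ne_zero_of_mul hw))) i
      have hv_le := mem_box.1 v.2 i
      have habs : q * |w i| ≤ |(q • w - v.1) i| + |v.1 i| := by
        calc q * |w i| = |(q • w - v.1) i + v.1 i| := by simp [abs_mul]
          _ ≤ _ := abs_add_le _ _
      have := abs_nonneg (w i)
      nlinarith

theorem trace_dworkMatrix_pow (hq : 2 ≤ q) (hF : F.coeff.support ⊆ box ι R) (m : ℕ) :
    (dworkMatrix q F R ^ m).trace =
      ∑ u ∈ box ι R, (frobeniusProd q F m).coeff ((q ^ m - 1) • u) := by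
  rw [← Finset.sum_coe_sort (box ι R), Matrix.trace]
  refine Finset.sum_congr rfl fun u _ ↦ ?_
  have hqm : q ^ m • u.1 - u.1 = (q ^ m - 1) • u.1 := by
    rw [← Nat.sub_add_cancel (Nat.one_le_pow m q (by omega)), add_smul, one_smul,
      Nat.add_sub_cancel, add_sub_cancel_right]
  rw [Matrix.diag_apply, dworkMatrix_pow_apply hq hF, hqm]

/-- The value of a Laurent polynomial at a point of the torus. -/
def evalTorus (z : ι → Kˣ) : Laurent K ι →ₐ[K] K :=
  AddMonoidAlgebra.lift K K (ι → ℤ)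
    { toFun := fun u ↦ ((∏ i, z i ^ u.toAdd i : Kˣ) : K)
      map_one' := by simp
      map_mul' := fun u v ↦ by simp [zpow_add, Finset.prod_mul_distrib] }

theorem evalTorus_single (z : ι → Kˣ) (u : ι → ℤ) (c : K) :
    evalTorus z (single u c) = c * ∏ i, (z i : K) ^ u i := by
  simp [evalTorus, lift_single]

theorem evalTorus_eq_sum_box (hF : F.coeff.support ⊆ box ι R) (z : ι → Kˣ) :
    evalTorus z F = ∑ u ∈ box ι R, F.coeff u * ∏ i, (z i : K) ^ u i := by
  rw [← Finsupp.sum_of_support_subset _ hF (fun u c ↦ c * ∏ i, (z i : K) ^ u i) (by simp)]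
  simp [evalTorus, lift_apply]

theorem evalTorus_expandHom (q : ℕ) (z : ι → Kˣ) (F : Laurent K ι) :
    evalTorus z (expandHom q F) = evalTorus (z ^ q) F := by
  induction F using AddMonoidAlgebra.induction_linear with
  | zero => simp
  | add x y hx hy => simp only [map_add, hx, hy]
  | single u c =>
    rw [expandHom_single, evalTorus_single, evalTorus_single]
    refine congrArg _ (Finset.prod_congr rfl fun i _ ↦ ?_)
    rw [Pi.pow_apply, Units.val_pow_eq_pow_val, ← zpow_natCast, ← zpow_mul, Pi.smul_apply,
      nsmul_eq_mul]

theorem evalTorus_frobeniusProd (q : ℕ) (F : Laurent K ι) (m : ℕ) (z : ι → Kˣ) :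
    evalTorus z (frobeniusProd q F m) = ∏ i ∈ Finset.range m, evalTorus (z ^ q ^ i) F := by
  induction m generalizing z with
  | zero => simp [frobeniusProd]
  | succ m ih =>
    simp only [frobeniusProd, map_mul, evalTorus_expandHom, ih, Finset.prod_range_succ', ← pow_mul,
      ← pow_succ', pow_zero, pow_one, mul_comm]

variable {G : Type*} [CommGroup G] [Fintype G] {φ : G →* Kˣ}

theorem sum_zpow_eq_ite (hφ : Function.Injective φ) (k : ℤ) : ∑ x, (φ x : K) ^ k =
    if (Fintype.card G : ℤ) ∣ k then (Fintype.card G : K) else 0 := by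
  let f : G →* K := (Units.coeHom K).comp ((zpowGroupHom k).comp φ)
  have hcyc : IsCyclic G :=
    isCyclic_of_injective_ringHom ((Units.coeHom K).comp φ) (Units.val_injective.comp hφ)
  obtain ⟨g, hg⟩ := IsCyclic.exists_ofOrder_eq_natCard (α := G)
  have hf : f = 1 ↔ (Fintype.card G : ℤ) ∣ k := by
    rw [← Nat.card_eq_fintype_card]
    refine ⟨fun h ↦ ?_, fun ⟨c, hc⟩ ↦ MonoidHom.ext fun x ↦ ?_⟩
    · rw [← hg, orderOf_dvd_iff_zpow_eq_one]
      refine hφ (Units.ext ?_)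
      simpa [f] using DFunLike.congr_fun h g
    · simp [f, hc, zpow_mul, ← map_pow]
  simpa [f, hf] using sum_hom_units f

theorem sum_prod_zpow_eq_ite (hφ : Function.Injective φ) (k : ι → ℤ) :
    ∑ x : ι → G, ∏ i, (φ (x i) : K) ^ k i =
    if ∀ i, (Fintype.card G : ℤ) ∣ k i then (Fintype.card G : K) ^ Fintype.card ι else 0 := by
  have := Finset.prod_univ_sum (fun _ ↦ Finset.univ) fun i (g : G) ↦ (φ g : K) ^ k i
  rw [Fintype.piFinset_univ] at this
  rw [← this]
  simp only [sum_zpow_eq_ite hφ, Finset.prod_ite_zero, Finset.mem_univ, true_imp_iff,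
    Finset.prod_const, Finset.card_univ]

theorem sum_evalTorus (hφ : Function.Injective φ)
    (hF : F.coeff.support ⊆ box ι (R * Fintype.card G)) :
    ∑ x : ι → G, evalTorus (φ ∘ x) F =
      (Fintype.card G : K) ^ Fintype.card ι * ∑ u ∈ box ι R, F.coeff (Fintype.card G • u) := by
  have hG : (0 : ℤ) < Fintype.card G := by exact_mod_cast Fintype.card_pos
  simp only [evalTorus_eq_sum_box hF, Function.comp_apply]
  rw [Finset.sum_comm]
  simp only [← Finset.mul_sum, sum_prod_zpow_eq_ite hφ]
  rw [Finset.mul_sum]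
  symm
  refine Finset.sum_of_injOn (fun u : ι → ℤ ↦ Fintype.card G • u) ?_ ?_ ?_ ?_
  · exact (smul_right_injective (ι → ℤ) (Fintype.card_ne_zero (α := G))).injOn
  · intro u hu
    refine mem_box.2 fun i ↦ ?_
    have := mem_box.1 hu i
    simp only [Pi.smul_apply, nsmul_eq_mul, abs_mul, Nat.abs_cast, Nat.cast_mul]
    nlinarith
  · intro k hk hk'
    rw [if_neg, mul_zero]
    intro hdvd
    choose u hu using hdvd
    refine hk' ⟨u, mem_box.2 fun i ↦ ?_, by ext i; simp [hu]⟩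
    have := mem_box.1 hk i
    rw [hu, abs_mul, Nat.abs_cast, Nat.cast_mul, mul_comm] at this
    exact le_of_mul_le_mul_right this hG
  · intro u _
    rw [if_pos fun i ↦ ⟨u i, by simp⟩, mul_comm]

theorem sum_evalTorus_frobeniusProd (hφ : Function.Injective φ) (hq : 2 ≤ q)
    (hF : F.coeff.support ⊆ box ι R) {m : ℕ}
    (hG : Fintype.card G = q ^ m - 1) :
    ∑ x : ι → G, evalTorus (φ ∘ x) (frobeniusProd q F m) =
      ((q : K) ^ m - 1) ^ Fintype.card ι * (dworkMatrix q F R ^ m).trace := by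
  have hsupp := support_frobeniusProd_subset hq hF m
  rw [← hG] at hsupp
  rw [sum_evalTorus hφ hsupp, hG, trace_dworkMatrix_pow hq hF, Nat.cast_sub
    (Nat.one_le_pow _ _ (by omega)), Nat.cast_pow, Nat.cast_one]

end DworkTraceFormula

section GaussBounds

open PowerSeries

variable {K : Type*} [NormedField K]

/-- The bound `b` on the Gauss norm of radius `ρ` of a power series. -/
def HasGaussBound (ρ b : ℝ) (f : K⟦X⟧) : Prop := ∀ r, ‖coeff r f‖ * ρ ^ r ≤ b

variable {ρ b c : ℝ} {f g : K⟦X⟧}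

theorem hasGaussBound_C_sub_X_mul_C {x y : K} (hx : ‖x‖ ≤ b) (hy : ‖y‖ * ρ ≤ b) :
    HasGaussBound ρ b (C x - X * C y) := by
  have hb : 0 ≤ b := (norm_nonneg x).trans hx
  rintro (_ | _ | r)
  · simpa using hx
  · simpa [coeff_succ_X_mul, coeff_C] using hy
  · simpa [coeff_X, coeff_C] using hb

variable [IsUltrametricDist K]

theorem HasGaussBound.mul (hρ : 0 < ρ) (hf : HasGaussBound ρ b f) (hg : HasGaussBound ρ c g) :
    HasGaussBound ρ (b * c) (f * g) := by
  have hb : 0 ≤ b := (by positivity : 0 ≤ ‖coeff 0 f‖ * ρ ^ 0).trans (hf 0)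
  have hc : 0 ≤ c := (by positivity : 0 ≤ ‖coeff 0 g‖ * ρ ^ 0).trans (hg 0)
  intro r
  rw [← le_div_iff₀ (by positivity), coeff_mul]
  refine IsUltrametricDist.norm_sum_le_of_forall_le_of_nonneg (by positivity) fun x hx ↦ ?_
  rw [Finset.HasAntidiagonal.mem_antidiagonal] at hx
  rw [norm_mul, le_div_iff₀ (by positivity), ← hx, pow_add, mul_mul_mul_comm]
  exact mul_le_mul (hf _) (hg _) (by positivity) hb

theorem HasGaussBound.prod (hρ : 0 < ρ) {ι : Type*} {s : Finset ι} {b : ι → ℝ} {f : ι → K⟦X⟧}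
    (hf : ∀ i ∈ s, HasGaussBound ρ (b i) (f i)) :
    HasGaussBound ρ (∏ i ∈ s, b i) (∏ i ∈ s, f i) := by
  induction s using Finset.cons_induction with
  | empty =>
    rintro (_ | r) <;> simp [coeff_one]
  | cons i s hi ih =>
    rw [Finset.prod_cons, Finset.prod_cons]
    exact (hf i (Finset.mem_cons_self i s)).mul hρ
      (ih fun j hj ↦ hf j (Finset.mem_cons_of_mem hj))

theorem hasGaussBound_det {n : Type*} [Fintype n] [DecidableEq n] (hρ : 0 < ρ)
    {B : n → n → ℝ} {b : ℝ} {M : Matrix n n K⟦X⟧} (hM : ∀ u v, HasGaussBound ρ (B u v) (M u v))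
    (hB : ∀ σ : Equiv.Perm n, ∏ v, B (σ v) v = b) : HasGaussBound ρ b M.det := by
  have hterm (σ : Equiv.Perm n) : HasGaussBound ρ b (∏ v, M (σ v) v) :=
    hB σ ▸ HasGaussBound.prod hρ fun v _ ↦ hM (σ v) v
  have hb : 0 ≤ b := (by positivity : 0 ≤ ‖_‖ * ρ ^ 0).trans (hterm 1 0)
  intro r
  rw [← le_div_iff₀ (by positivity), Matrix.det_apply, map_sum]
  refine IsUltrametricDist.norm_sum_le_of_forall_le_of_nonneg (by positivity) fun σ _ ↦ ?_
  rw [le_div_iff₀ (by positivity)]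
  refine le_trans (le_of_eq ?_) (hterm σ r)
  rcases Int.units_eq_one_or (Equiv.Perm.sign σ) with h | h <;> simp [h]

/- Conjugating by the diagonal matrix with entries `a` turns the hypothesis into the row bound
`‖U u v‖ ≤ g u`, and each row of `1 - X • U` then contributes at most `max 1 (ρ * g u)`. -/
theorem hasGaussBound_det_one_sub_X_smul {n : Type*} [Fintype n] [DecidableEq n] (hρ : 0 < ρ)
    {U : Matrix n n K} {a g : n → ℝ} (ha : ∀ u, 0 < a u) (hU : ∀ u v, ‖U u v‖ * a v ≤ a u * g u) :
    HasGaussBound ρ (∏ u, max 1 (ρ * g u)) (1 - (X : K⟦X⟧) • U.map (C (R := K))).det := by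
  refine hasGaussBound_det hρ (B := fun u v ↦ a u / a v * max 1 (ρ * g u)) (fun u v ↦ ?_)
    fun σ ↦ ?_
  · have hentry : (1 - (X : K⟦X⟧) • U.map (C (R := K))) u v =
        C ((1 : Matrix n n K) u v) - X * C (U u v) := by
      simp [Matrix.one_apply, apply_ite (C (R := K))]
    have := ha u
    have := ha v
    rw [hentry]
    refine hasGaussBound_C_sub_X_mul_C ?_ ?_
    · rw [Matrix.one_apply]
      split_ifs with h
      · rw [h, div_self (ha v).ne', norm_one, one_mul]
        exact le_max_left _ _
      · rw [norm_zero]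
        positivity
    · calc ‖U u v‖ * ρ ≤ a u * g u / a v * ρ := by
            gcongr
            exact (le_div_iff₀ (ha v)).2 (hU u v)
        _ = a u / a v * (ρ * g u) := by ring
        _ ≤ _ := by
            gcongr
            exact le_max_right _ _
  · rw [Finset.prod_mul_distrib, Finset.prod_div_distrib, Equiv.prod_comp σ a,
      Equiv.prod_comp σ fun v ↦ max 1 (ρ * g v), div_self, one_mul]
    exact Finset.prod_ne_zero_iff.2 fun v _ ↦ (ha v).ne'

end GaussBounds

section Decay

open PowerSeries Filter Topology

variable {ι : Type*} [Fintype ι]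

/-- The `ℓ¹` norm of an exponent vector. -/
def weight (u : ι → ℤ) : ℕ := ∑ i, (u i).natAbs

theorem weight_add_le (u v : ι → ℤ) : weight (u + v) ≤ weight u + weight v := by
  rw [weight, weight, weight, ← Finset.sum_add_distrib]
  exact Finset.sum_le_sum fun i _ ↦ Int.natAbs_add_le _ _

theorem weight_nsmul (n : ℕ) (u : ι → ℤ) : weight (n • u) = n * weight u := by
  simp [weight, Finset.mul_sum, Int.natAbs_mul]

theorem mem_box_of_weight_le {u : ι → ℤ} {R : ℕ} (h : weight u ≤ R) : u ∈ box ι R := by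
  refine mem_box.2 fun i ↦ ?_
  rw [Int.abs_eq_natAbs]
  exact_mod_cast (Finset.single_le_sum_of_canonicallyOrdered (f := fun i ↦ (u i).natAbs)
    (Finset.mem_univ i)).trans h

theorem prod_le_finprod_of_one_le {X : Type*} {g : X → ℝ} (hg : ∀ x, 1 ≤ g x)
    (hfin : g.mulSupport.Finite) (s : Finset X) : ∏ x ∈ s, g x ≤ ∏ᶠ x, g x := by
  rw [finprod_eq_prod_of_mulSupport_subset (s := s ∪ hfin.toFinset) g (by simp)]
  exact Finset.prod_le_prod_of_subset_of_one_le Finset.subset_union_left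
    (fun x _ ↦ zero_le_one.trans (hg x)) fun x _ _ ↦ hg x

theorem finite_mulSupport_max_weight {κ : ℝ} (h0 : 0 ≤ κ) (h1 : κ < 1) (ρ : ℝ) :
    (fun u : ι → ℤ ↦ max 1 (ρ * κ ^ weight u)).mulSupport.Finite := by
  have hlim := ((tendsto_pow_atTop_nhds_zero_of_lt_one h0 h1).const_mul ρ).eventually_le_const
    (show ρ * 0 < 1 by simp)
  obtain ⟨H, hH⟩ := hlim.exists_forall_of_atTop
  refine (box ι H).finite_toSet.subset fun u hu ↦ ?_
  by_contra hbox
  exact hu (max_eq_left (hH _ (le_of_not_ge fun h ↦ hbox (mem_box_of_weight_le h))))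

variable {K : Type*} [NormedField K] [IsUltrametricDist K] {κ : ℝ}

/-- The Laurent polynomials whose coefficient at `x ^ u` has norm at most `κ ^ weight u`. -/
def decaying (K ι : Type*) [Fintype ι] [NormedField K] [IsUltrametricDist K] {κ : ℝ}
    (h0 : 0 < κ) (h1 : κ ≤ 1) : Submonoid (Laurent K ι) where
  carrier := {F | ∀ u, ‖F.coeff u‖ ≤ κ ^ weight u}
  one_mem' u := by
    rw [AddMonoidAlgebra.one_def, AddMonoidAlgebra.coeff_single, Finsupp.single_apply]
    split_ifs with h
    · simp [← h, weight]
    · rw [norm_zero]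
      positivity
  mul_mem' {F G} hF hG u := by
    rw [AddMonoidAlgebra.coeff_mul_apply_right, Finsupp.sum]
    refine IsUltrametricDist.norm_sum_le_of_forall_le_of_nonneg (by positivity) fun w _ ↦ ?_
    calc ‖F.coeff (u + -w) * G.coeff w‖ ≤ κ ^ weight (u + -w) * κ ^ weight w := by
          rw [norm_mul]
          exact mul_le_mul (hF _) (hG _) (norm_nonneg _) (by positivity)
      _ ≤ κ ^ weight u := by
          rw [← pow_add]
          refine pow_le_pow_of_le_one h0.le h1 ?_
          simpa using weight_add_le (u + -w) w

/- The exponent `q • u - v` of the entry `(u, v)` has weight at least `2 * weight u - weight v`. -/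
theorem hasGaussBound_det_dworkMatrix {h0 : 0 < κ} {h1 : κ ≤ 1} {F : Laurent K ι}
    (hF : F ∈ decaying K ι h0 h1) {q : ℕ} (hq : 2 ≤ q) (R : ℕ) {ρ : ℝ} (hρ : 0 < ρ) :
    HasGaussBound ρ (∏ u ∈ box ι R, max 1 (ρ * κ ^ weight u))
      (1 - (X : K⟦X⟧) • (dworkMatrix q F R).map (C (R := K))).det := by
  rw [← Finset.prod_coe_sort (box ι R)]
  refine hasGaussBound_det_one_sub_X_smul hρ (a := fun u ↦ κ ^ weight u.1) (fun u ↦ by positivity)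
    fun u v ↦ ?_
  calc ‖dworkMatrix q F R u v‖ * κ ^ weight v.1
      ≤ κ ^ weight (q • u.1 - v.1) * κ ^ weight v.1 := by
        gcongr
        exact hF _
    _ ≤ κ ^ weight u.1 * κ ^ weight u.1 := by
        rw [← pow_add, ← pow_add]
        refine pow_le_pow_of_le_one h0.le h1 ?_
        have := weight_add_le (q • u.1 - v.1) v.1
        rw [sub_add_cancel, weight_nsmul] at this
        nlinarith

theorem exists_hasPowerSums_of_tendsto_trace [CharZero K] {q : ℕ} (hq : 2 ≤ q) (h0 : 0 < κ)
    (h1 : κ < 1) {F : ℕ → Laurent K ι} (hF : ∀ M, F M ∈ decaying K ι h0 h1.le) {R : ℕ → ℕ}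
    {v : ℕ → K} (hv : ∀ m, 1 ≤ m →
      Tendsto (fun M ↦ (dworkMatrix q (F M) (R M) ^ m).trace) atTop (𝓝 (v m))) :
    ∃ A, HasPowerSums v A ∧ ∀ z, A ∈ convergentAt z := by
  obtain ⟨A, hA⟩ := HasPowerSums.exists_of_field v
  refine ⟨A, hA, fun z ↦ ?_⟩
  have hρ : 0 < ‖z‖ + 1 := by positivity
  refine mem_convergentAt_of_bounded (B := ∏ᶠ u : ι → ℤ, max 1 ((‖z‖ + 1) * κ ^ weight u))
    (lt_add_one ‖z‖) fun r ↦ ?_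
  have hlim := hA.tendsto_coeff
    (fun M ↦ HasPowerSums.det_one_sub_X_smul (dworkMatrix q (F M) (R M))) hv r
  refine le_of_tendsto (hlim.norm.mul_const ((‖z‖ + 1) ^ r)) (Eventually.of_forall fun M ↦ ?_)
  exact (hasGaussBound_det_dworkMatrix (hF M) hq (R M) hρ r).trans <|
    prod_le_finprod_of_one_le (fun u ↦ le_max_left _ _)
      (finite_mulSupport_max_weight h0.le h1 (‖z‖ + 1)) _

end Decay

section DworkTruncation

open PowerSeries Filter Topology Finset

variable {K ι E : Type*} [NormedField K] [Fintype E]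

theorem prod_range_mul_eq {M : Type*} [CommMonoid M] (g : ℕ → M) (a m : ℕ) :
    ∏ j ∈ range (a * m), g j = ∏ i ∈ range m, ∏ l ∈ range a, g (a * i + l) := by
  induction m with
  | zero => simp
  | succ m ih => rw [mul_add, mul_one, prod_range_add, prod_range_succ, ih]

/-- The Laurent polynomial `∏ l < a, ∏ e, S_M ((c e * x ^ ν e) ^ p ^ l)`, where `S_M` is the
truncation of `S` in degree `M` and `c` is fixed by the `p ^ a`-th power; the power `p ^ l` is
also applied to the coefficient, as for Teichmüller representatives. -/
def truncatedProd (p a : ℕ) (S : K⟦X⟧) (c : E → K) (ν : E → ι → ℤ) (M : ℕ) : Laurent K ι :=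
  ∏ l ∈ range a, ∏ e,
    Polynomial.aeval (AddMonoidAlgebra.single (p ^ l • ν e) (c e ^ p ^ l)) (trunc M S)

variable {S : K⟦X⟧}

theorem tendsto_eval_trunc [CompleteSpace K] {z : K} (hS : S ∈ convergentAt z) :
    Tendsto (fun M ↦ (trunc M S).eval z) atTop (𝓝 (evalAt z S)) := by
  simp only [← Polynomial.eval₂_id, eval₂_trunc_eq_sum_range, RingHom.id_apply]
  exact (mem_convergentAt.1 hS).of_norm.hasSum.tendsto_sum_nat

variable [Fintype ι]

theorem evalTorus_truncatedProd {p a : ℕ} {c : E → K} (hc : ∀ e, c e ^ p ^ a = c e)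
    (ν : E → ι → ℤ) (M i : ℕ) (z : ι → Kˣ) :
    evalTorus (z ^ (p ^ a) ^ i) (truncatedProd p a S c ν M) =
      ∏ l ∈ range a, ∏ e,
        (trunc M S).eval ((c e * ∏ j, (z j : K) ^ ν e j) ^ p ^ (a * i + l)) := by
  simp only [truncatedProd, map_prod, ← Polynomial.aeval_algHom_apply, evalTorus_single,
    Polynomial.coe_aeval_eq_eval]
  refine prod_congr rfl fun l _ ↦ prod_congr rfl fun e _ ↦ congrArg (Polynomial.eval · _) ?_
  rw [mul_pow]
  congr 1
  · have := ((periodic_pow_pow (hc e)).nat_mul i l).symm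
    simpa only [add_comm l, mul_comm, Nat.cast_id] using this
  · rw [← prod_pow]
    refine prod_congr rfl fun j _ ↦ ?_
    rw [Pi.pow_apply, Units.val_pow_eq_pow_val, ← pow_mul, ← zpow_natCast, ← zpow_natCast,
      ← zpow_mul, ← zpow_mul, Pi.smul_apply, nsmul_eq_mul]
    push_cast
    rw [pow_add, pow_mul, ← mul_assoc, mul_comm (ν e j)]

theorem tendsto_evalTorus_truncatedProd [CompleteSpace K] {p a : ℕ} {c : E → K}
    (hc : ∀ e, c e ^ p ^ a = c e)
    {ν : E → ι → ℤ} {z : ι → Kˣ}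
    (hS : ∀ e j, S ∈ convergentAt ((c e * ∏ i, (z i : K) ^ ν e i) ^ p ^ j)) (m : ℕ) :
    Tendsto (fun M ↦ evalTorus z (frobeniusProd (p ^ a) (truncatedProd p a S c ν M) m)) atTop
      (𝓝 (∏ e, ∏ j ∈ range (a * m), evalAt ((c e * ∏ i, (z i : K) ^ ν e i) ^ p ^ j) S)) := by
  rw [Finset.prod_comm (s := univ), prod_range_mul_eq]
  simp only [evalTorus_frobeniusProd, evalTorus_truncatedProd hc]
  exact tendsto_finsetProd _ fun i _ ↦ tendsto_finsetProd _ fun l _ ↦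
    tendsto_finsetProd _ fun e _ ↦ tendsto_eval_trunc (hS e _)

variable [IsUltrametricDist K] {κ κ' : ℝ}

theorem aeval_single_trunc_mem_decaying (h0 : 0 < κ') (h1 : κ' ≤ 1)
    (hS : ∀ n, ‖coeff n S‖ ≤ κ ^ n) {w : ι → ℤ} (hw0 : 0 ≤ κ) (hw : κ ≤ κ' ^ weight w) {c : K}
    (hc : ‖c‖ ≤ 1) (M : ℕ) :
    Polynomial.aeval (AddMonoidAlgebra.single w c) (trunc M S) ∈ decaying K ι h0 h1 := by
  intro u
  rw [Polynomial.aeval_def, eval₂_trunc_eq_sum_range, AddMonoidAlgebra.coeff_sum,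
    Finsupp.finsetSum_apply]
  refine IsUltrametricDist.norm_sum_le_of_forall_le_of_nonneg (by positivity) fun n _ ↦ ?_
  rw [← Algebra.smul_def, AddMonoidAlgebra.single_pow, AddMonoidAlgebra.coeff_smul,
    AddMonoidAlgebra.coeff_single, Finsupp.smul_apply, Finsupp.single_apply]
  split_ifs with h
  · calc ‖coeff n S • c ^ n‖ ≤ κ ^ n * 1 := by
          rw [norm_smul, norm_pow]
          exact mul_le_mul (hS n) (pow_le_one₀ (norm_nonneg c) hc) (by positivity) (by positivity)
      _ ≤ (κ' ^ weight w) ^ n := by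
          rw [mul_one]
          gcongr
      _ = κ' ^ weight u := by rw [← h, weight_nsmul, ← pow_mul, mul_comm]
  · rw [smul_zero, norm_zero]
    positivity

theorem exists_forall_le_pow_weight {J : Type*} (s : Finset J) (w : J → ι → ℤ) (h0 : 0 < κ)
    (h1 : κ < 1) : ∃ κ' : ℝ, 0 < κ' ∧ κ' < 1 ∧ ∀ j ∈ s, κ ≤ κ' ^ weight (w j) := by
  let D := s.sup (fun j ↦ weight (w j)) + 1
  have hlt : κ ^ (D⁻¹ : ℝ) < 1 := Real.rpow_lt_one h0.le h1 (by positivity)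
  refine ⟨κ ^ (D⁻¹ : ℝ), Real.rpow_pos_of_pos h0 _, hlt, fun j hj ↦ ?_⟩
  calc κ = (κ ^ (D⁻¹ : ℝ)) ^ D := (Real.rpow_inv_natCast_pow h0.le (Nat.succ_ne_zero _)).symm
    _ ≤ _ := pow_le_pow_of_le_one (by positivity) hlt.le
      ((le_sup (f := fun j ↦ weight (w j)) hj).trans (Nat.le_succ _))

theorem exists_truncatedProd_mem_decaying (p a : ℕ) (h0 : 0 < κ) (h1 : κ < 1)
    (hS : ∀ n, ‖coeff n S‖ ≤ κ ^ n) {c : E → K} (hc : ∀ e, ‖c e‖ ≤ 1) (ν : E → ι → ℤ) :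
    ∃ (κ' : ℝ) (h0 : 0 < κ') (h1 : κ' < 1), ∀ M,
      truncatedProd p a S c ν M ∈ decaying K ι h0 h1.le := by
  obtain ⟨κ', h0', h1', hκ'⟩ := exists_forall_le_pow_weight (range a ×ˢ (univ : Finset E))
    (fun j ↦ p ^ j.1 • ν j.2) h0 h1
  refine ⟨κ', h0', h1', fun M ↦ prod_mem fun l hl ↦ prod_mem fun e _ ↦ ?_⟩
  refine aeval_single_trunc_mem_decaying h0' h1'.le hS h0.le
    (hκ' (l, e) (mem_product.2 ⟨hl, mem_univ e⟩)) ?_ M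
  rw [norm_pow]
  exact pow_le_one₀ (norm_nonneg _) (hc e)

end DworkTruncation

section Torus

open Finset

theorem pow_eq_self_of_mem_rootsOfUnity {L : Type*} [CommMonoid L] {Q : ℕ} (hQ : Q ≠ 0) {y : Lˣ}
    (hy : y ∈ rootsOfUnity (Q - 1) L) : (y : L) ^ Q = y := by
  rw [← Nat.succ_pred_eq_of_ne_zero hQ, pow_succ, Nat.pred_eq_sub_one,
    (mem_rootsOfUnity' _ _).1 hy, one_mul]

theorem finsum_torus {L M ι : Type*} [Field L] [AddCommMonoid M] [Fintype ι] [DecidableEq ι]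
    {Q : ℕ} (hQ : Q ≠ 0) [Fintype (rootsOfUnity (Q - 1) L)] (f : (ι → L) → M) :
    ∑ᶠ (x : ι → L) (_ : ∀ i, x i ^ Q = x i ∧ x i ≠ 0), f x =
      ∑ x : ι → rootsOfUnity (Q - 1) L, f fun i ↦ ((x i : Lˣ) : L) := by
  let e : (ι → rootsOfUnity (Q - 1) L) → ι → L := fun x i ↦ ((x i : Lˣ) : L)
  have he : Function.Injective e := fun x y h ↦
    funext fun i ↦ Subtype.ext (Units.ext (congrFun h i))
  have hrange : Set.range e = {x | ∀ i, x i ^ Q = x i ∧ x i ≠ 0} := by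
    ext x
    refine ⟨?_, fun hx ↦ ⟨fun i ↦ ⟨Units.mk0 (x i) (hx i).2, ?_⟩, rfl⟩⟩
    · rintro ⟨y, rfl⟩ i
      exact ⟨pow_eq_self_of_mem_rootsOfUnity hQ (y i).2, Units.ne_zero _⟩
    · refine (mem_rootsOfUnity' _ _).2 (mul_right_cancel₀ (hx i).2 ?_)
      rw [Units.val_mk0, pow_sub_one_mul hQ, one_mul, (hx i).1]
  rw [← finsum_eq_sum_of_fintype, ← finsum_mem_range he, hrange]
  rfl

variable {p : ℕ} [Fact p.Prime]

theorem neZero_pow_sub_one {d : ℕ} (hd : d ≠ 0) : NeZero (p ^ d - 1) :=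
  ⟨Nat.sub_ne_zero_of_lt (Nat.one_lt_pow hd (Fact.out : p.Prime).one_lt)⟩

theorem card_rootsOfUnity_pow_sub_one {k : Type*} [Field k] [IsAlgClosed k] [CharP k p] {d : ℕ}
    (hd : d ≠ 0) : Nat.card (rootsOfUnity (p ^ d - 1) k) = p ^ d - 1 := by
  have := neZero_pow_sub_one (p := p) hd
  have : NeZero ((p ^ d - 1 : ℕ) : k) := ⟨by
    rw [Nat.cast_sub (Nat.one_le_pow _ _ (Fact.out : p.Prime).pos)]
    simp [hd]⟩
  exact HasEnoughRootsOfUnity.natCard_rootsOfUnity k _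

variable (p) in
/-- The subfield of elements fixed by the `p ^ d`-power Frobenius, with `p ^ d` elements when
`d ≠ 0`. -/
def frobeniusFixed (d : ℕ) : Subfield (Omg p) :=
  (iterateFrobenius (Omg p) p d).eqLocusField (RingHom.id _)

theorem mem_frobeniusFixed {d : ℕ} {x : Omg p} : x ∈ frobeniusFixed p d ↔ x ^ p ^ d = x := Iff.rfl

theorem mem_frobeniusFixed_mul {a : ℕ} {x : Omg p} (hx : x ∈ frobeniusFixed p a) (m : ℕ) :
    x ∈ frobeniusFixed p (a * m) := by
  have := (periodic_pow_pow (mem_frobeniusFixed.1 hx)).nat_mul m 0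
  simpa [mem_frobeniusFixed, mul_comm] using this

theorem traceZmod_sum {d : ℕ} {E : Type*} {s : Finset E} {y : E → Omg p}
    (hy : ∀ e ∈ s, y e ∈ frobeniusFixed p d) :
    traceZmod p d (∑ e ∈ s, y e) = ∑ e ∈ s, traceZmod p d (y e) := by
  refine (algebraMap (ZMod p) (Omg p)).injective ?_
  rw [algebraMap_traceZmod (sum_mem hy), map_sum,
    sum_congr rfl fun e he ↦ algebraMap_traceZmod (hy e he), sum_comm]
  exact sum_congr rfl fun j _ ↦ sum_pow_char_pow p j s y

theorem addChar_traceZmod_sum {K : Type*} [CommMonoid K] (χ : AddChar (ZMod p) K) {d : ℕ}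
    {E : Type*} {s : Finset E} {y : E → Omg p} (hy : ∀ e ∈ s, y e ∈ frobeniusFixed p d) :
    χ (traceZmod p d (∑ e ∈ s, y e)) = ∏ e ∈ s, χ (traceZmod p d (y e)) := by
  rw [traceZmod_sum hy]
  exact map_prod χ.toMonoidHom (fun e ↦ Multiplicative.ofAdd (traceZmod p d (y e))) s

/-- The exponential sum over the points of the torus `𝔾ₘ ^ ι` with coordinates in the field with
`p ^ d` elements of the Laurent polynomial with terms `c e * x ^ ν e`. -/
def torusCharSum {R : Type*} [CommRing R] (χ : AddChar (ZMod p) R) {ι E : Type*} [Fintype ι]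
    [Fintype E] (c : E → Omg p) (ν : E → ι → ℤ) (d : ℕ) : R :=
  ∑ᶠ (x : ι → Omg p) (_ : ∀ i, x i ^ p ^ d = x i ∧ x i ≠ 0),
    χ (traceZmod p d (∑ e, c e * ∏ i, x i ^ ν e i))

end Torus

section DworkEntire

open Filter Topology Finset

theorem pow_pow_sub_one_ne_zero {p a : ℕ} [Fact p.Prime] (ha : a ≠ 0) {m : ℕ} (hm : m ≠ 0) :
    ((p : ℂ_[p]) ^ a) ^ m - 1 ≠ 0 := by
  rw [sub_ne_zero, ← pow_mul]
  exact_mod_cast (Nat.one_lt_pow (mul_ne_zero ha hm) (Fact.out : p.Prime).one_lt).ne'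

variable {p a : ℕ} [Fact p.Prime] {ι E : Type*} [Fintype ι] [Fintype E]
  {χ : AddChar (ZMod p) ℂ_[p]} {c : E → Omg p}

theorem tendsto_evalTorus_addChar (hc : ∀ e, c e ∈ frobeniusFixed p a) (ν : E → ι → ℤ)
    {τ : Omg p →*₀ ℂ_[p]} {S : PowerSeries ℂ_[p]}
    (hτ : ∀ x, ‖τ x‖ ≤ 1) (hS : ∀ z, ‖z‖ ≤ 1 → S ∈ convergentAt z)
    (hχ : ∀ d x, x ^ p ^ d = x → χ (traceZmod p d x) = ∏ j ∈ range d, evalAt (τ x ^ p ^ j) S)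
    {m : ℕ} {x : ι → (Omg p)ˣ} (hx : ∀ i, (x i : Omg p) ∈ frobeniusFixed p (a * m)) :
    Tendsto (fun M ↦ evalTorus (fun i ↦ Units.map (τ : Omg p →* ℂ_[p]) (x i))
        (frobeniusProd (p ^ a) (truncatedProd p a S (fun e ↦ τ (c e)) ν M) m)) atTop
      (𝓝 (χ (traceZmod p (a * m) (∑ e, c e * ∏ i, (x i : Omg p) ^ ν e i)))) := by
  have hmem (e : E) : c e * ∏ i, (x i : Omg p) ^ ν e i ∈ frobeniusFixed p (a * m) :=
    mul_mem (mem_frobeniusFixed_mul (hc e) m) (prod_mem fun i _ ↦ zpow_mem (hx i) _)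
  have hτmul (e : E) : τ (c e) * ∏ i, (Units.map (τ : Omg p →* ℂ_[p]) (x i) : ℂ_[p]) ^ ν e i =
      τ (c e * ∏ i, (x i : Omg p) ^ ν e i) := by
    simp
  rw [addChar_traceZmod_sum χ fun e _ ↦ hmem e, prod_congr rfl fun e _ ↦ hχ _ _ (hmem e)]
  simp only [← hτmul]
  refine tendsto_evalTorus_truncatedProd (fun e ↦ ?_) (fun e j ↦ hS _ ?_) m
  · rw [← map_pow, mem_frobeniusFixed.1 (hc e)]
  · rw [hτmul, norm_pow]
    exact pow_le_one₀ (norm_nonneg _) (hτ _)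

theorem tendsto_trace_dworkMatrix (hc : ∀ e, c e ∈ frobeniusFixed p a) (ν : E → ι → ℤ)
    {τ : Omg p →*₀ ℂ_[p]} {S : PowerSeries ℂ_[p]}
    (ha : a ≠ 0) (hτinj : Function.Injective τ)
    (hτ : ∀ x, ‖τ x‖ ≤ 1) (hS : ∀ z, ‖z‖ ≤ 1 → S ∈ convergentAt z)
    (hχ : ∀ d x, x ^ p ^ d = x → χ (traceZmod p d x) = ∏ j ∈ range d, evalAt (τ x ^ p ^ j) S)
    {R : ℕ → ℕ} (hR : ∀ M, (truncatedProd p a S (fun e ↦ τ (c e)) ν M).coeff.support ⊆ box ι (R M))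
    {m : ℕ} (hm : m ≠ 0) :
    Tendsto
      (fun M ↦ (dworkMatrix (p ^ a) (truncatedProd p a S (fun e ↦ τ (c e)) ν M) (R M) ^ m).trace)
      atTop (𝓝 (torusCharSum χ c ν (a * m) / (((p : ℂ_[p]) ^ a) ^ m - 1) ^ Fintype.card ι)) := by
  have hd : a * m ≠ 0 := mul_ne_zero ha hm
  have := neZero_pow_sub_one (p := p) hd
  let _ := Fintype.ofFinite (rootsOfUnity (p ^ (a * m) - 1) (Omg p))
  let φ := (Units.map (τ : Omg p →* ℂ_[p])).comp
    (rootsOfUnity (p ^ (a * m) - 1) (Omg p)).subtype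
  have hφ : Function.Injective φ := (Units.map_injective hτinj).comp Subtype.val_injective
  have hcard : Fintype.card (rootsOfUnity (p ^ (a * m) - 1) (Omg p)) = (p ^ a) ^ m - 1 := by
    rw [← Nat.card_eq_fintype_card, card_rootsOfUnity_pow_sub_one hd, pow_mul]
  have htrace (M : ℕ) := sum_evalTorus_frobeniusProd hφ
    (Nat.one_lt_pow ha (Fact.out : p.Prime).one_lt) (hR M) hcard
  push_cast at htrace
  simp only [fun M ↦ eq_div_of_mul_eq (pow_ne_zero _ (pow_pow_sub_one_ne_zero (p := p) ha hm))
    ((mul_comm _ _).trans (htrace M).symm), torusCharSum,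
    finsum_torus (pow_ne_zero _ (Fact.out : p.Prime).ne_zero)]
  refine (tendsto_finsetSum _ fun x _ ↦ ?_).div_const _
  refine tendsto_evalTorus_addChar hc ν hτ hS hχ fun i ↦ ?_
  exact pow_eq_self_of_mem_rootsOfUnity (pow_ne_zero _ (Fact.out : p.Prime).ne_zero) (x i).2

variable (χ)

theorem exists_hasPowerSums_torusCharSum (hc : ∀ e, c e ∈ frobeniusFixed p a) (ν : E → ι → ℤ)
    (ha : a ≠ 0) :
    ∃ v A, HasPowerSums v A ∧ (∀ z, A ∈ convergentAt z) ∧ ∀ m, 1 ≤ m →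
      torusCharSum χ c ν (a * m) = (((p : ℂ_[p]) ^ a) ^ m - 1) ^ Fintype.card ι * v m := by
  obtain ⟨τ, S, κ, hτinj, hτ, h0, h1, hS, hχ⟩ := exists_teichmuller_splittingSeries p χ
  have hconv (z : ℂ_[p]) (hz : ‖z‖ ≤ 1) : S ∈ convergentAt z := by
    refine mem_convergentAt_of_bounded (hz.trans_lt ((one_lt_inv₀ h0).2 h1)) (B := 1) fun n ↦ ?_
    calc ‖PowerSeries.coeff n S‖ * κ⁻¹ ^ n ≤ κ ^ n * κ⁻¹ ^ n := by gcongr; exact hS n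
      _ = 1 := by rw [← mul_pow, mul_inv_cancel₀ h0.ne', one_pow]
  obtain ⟨κ', h0', h1', hF⟩ :=
    exists_truncatedProd_mem_decaying p a h0 h1 hS (fun e ↦ hτ (c e)) ν
  choose R hR using fun M ↦ exists_support_subset_box
    (truncatedProd p a S (fun e ↦ τ (c e)) ν M)
  obtain ⟨A, hA, hent⟩ := exists_hasPowerSums_of_tendsto_trace
    (Nat.one_lt_pow ha (Fact.out : p.Prime).one_lt) h0' h1' hF fun m hm ↦
      tendsto_trace_dworkMatrix hc ν ha hτinj hτ hconv hχ hR (Nat.one_le_iff_ne_zero.1 hm)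
  refine ⟨_, A, hA, hent, fun m hm ↦ (mul_div_cancel₀ _ (pow_ne_zero _ ?_)).symm⟩
  exact pow_pow_sub_one_ne_zero ha (Nat.one_le_iff_ne_zero.1 hm)

end DworkEntire

section Moment

open Finset

variable {K : Type} [Field K] {n s k : ℕ} (f : (Fin n → ℤ) →₀ K)
  (P : ((Fin n → ℤ) × (Fin s → ℤ)) →₀ K)

/-- The coefficients of the Laurent polynomial `∑ b : Fin k, Ḡ (x b, t)` in the variables `t j` and
`x b i`, whose exponential sum is the `k`-th power moment of the family. Its monomials are indexed
by a block `b` and a monomial of `f̄` or of `P̄`. -/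
def momentCoeff (e : Fin k × (f.support ⊕ P.support)) : K :=
  Sum.elim (fun μ : f.support ↦ f μ) (fun g : P.support ↦ P g) e.2

/-- The exponents of the Laurent polynomial `∑ b : Fin k, Ḡ (x b, t)`, with `Sum.inl j` standing
for the variable `t j` and `Sum.inr (b, i)` for `x b i`. -/
def momentExponent (e : Fin k × (f.support ⊕ P.support)) : Fin s ⊕ Fin k × Fin n → ℤ :=
  Sum.elim (Sum.elim (fun _ ↦ 0) (fun g ↦ g.1.2) e.2)
    fun bi ↦ if bi.1 = e.1 then Sum.elim (fun μ ↦ μ.1 bi.2) (fun g ↦ g.1.1 bi.2) e.2 else 0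

theorem prod_zpow_ite_fst_eq (b : Fin k) (z : Fin k × Fin n → K) (u : Fin n → ℤ) :
    ∏ bi : Fin k × Fin n, z bi ^ (if bi.1 = b then u bi.2 else 0) = mon (fun i ↦ z (b, i)) u := by
  rw [Fintype.prod_prod_type, Fintype.prod_eq_single b fun b' hb ↦ by simp [hb]]
  simp [mon]

theorem sum_momentCoeff_mul (y : Fin s ⊕ Fin k × Fin n → K) :
    ∑ e, momentCoeff f P e * ∏ i, y i ^ momentExponent f P e i =
      ∑ b, Gval f P (fun i ↦ y (.inr (b, i))) (fun j ↦ y (.inl j)) := by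
  rw [Fintype.sum_prod_type]
  refine sum_congr rfl fun b _ ↦ ?_
  rw [Fintype.sum_sum_type, Gval, Finsupp.sum, Finsupp.sum,
    ← sum_coe_sort f.support, ← sum_coe_sort P.support]
  congr 1 <;> refine sum_congr rfl fun g _ ↦ ?_ <;>
    simp only [momentCoeff, momentExponent, Fintype.prod_sum_type, Sum.elim_inl, Sum.elim_inr]
  · rw [prod_zpow_ite_fst_eq b (fun bi ↦ y (.inr bi)) g.1]
    simp
  · rw [prod_zpow_ite_fst_eq b (fun bi ↦ y (.inr bi)) g.1.1, mul_comm (∏ _, _), ← mul_assoc]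
    rfl

variable {f P}

theorem Gval_mem {F : Subfield K} (hf : ∀ μ, f μ ∈ F) (hP : ∀ g, P g ∈ F) {x : Fin n → K}
    {t : Fin s → K} (hx : ∀ i, x i ∈ F) (ht : ∀ j, t j ∈ F) : Gval f P x t ∈ F := by
  have hmon {r : ℕ} {z : Fin r → K} (hz : ∀ i, z i ∈ F) (u : Fin r → ℤ) : mon z u ∈ F :=
    prod_mem fun i _ ↦ zpow_mem (hz i) _
  exact add_mem (sum_mem fun μ _ ↦ mul_mem (hf μ) (hmon hx μ))
    (sum_mem fun g _ ↦ mul_mem (mul_mem (hP g) (hmon hx g.1)) (hmon ht g.2))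

theorem momentCoeff_mem {F : Subfield K} (hf : ∀ μ, f μ ∈ F) (hP : ∀ g, P g ∈ F)
    (e : Fin k × (f.support ⊕ P.support)) : momentCoeff f P e ∈ F := by
  rcases e with ⟨b, μ | g⟩
  · exact hf μ
  · exact hP g

theorem Ntor_eq_torusCharSum {p a : ℕ} [Fact p.Prime] (ha : a ≠ 0) (Θ : AddChar (ZMod p) ℂ)
    {f : (Fin n → ℤ) →₀ Omg p} (hf : ∀ μ, f μ ∈ frobeniusFixed p a)
    {P : ((Fin n → ℤ) × (Fin s → ℤ)) →₀ Omg p} (hP : ∀ g, P g ∈ frobeniusFixed p a) (k : ℕ)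
    {m : ℕ} (hm : m ≠ 0) :
    Ntor p a Θ f P k m =
      (-1) ^ (k * n) * torusCharSum Θ (momentCoeff (k := k) f P) (momentExponent f P) (a * m) := by
  have hq : p ^ (a * m) ≠ 0 := pow_ne_zero _ (Fact.out : p.Prime).ne_zero
  have := neZero_pow_sub_one (p := p) (mul_ne_zero ha hm)
  let _ := Fintype.ofFinite (rootsOfUnity (p ^ (a * m) - 1) (Omg p))
  simp only [Ntor, torSum, torusCharSum, finsum_torus hq]
  rw [← (Equiv.sumArrowEquivProdArrow ..).symm.sum_comp, Fintype.sum_prod_type, mul_sum]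
  refine sum_congr rfl fun t _ ↦ ?_
  rw [mul_pow, ← pow_mul, mul_comm n, ← (Equiv.curry ..).symm.sum_comp, Fintype.sum_pow]
  congr 1
  refine sum_congr rfl fun x _ ↦ ?_
  have hmem (y : rootsOfUnity (p ^ (a * m) - 1) (Omg p)) :
      ((y : (Omg p)ˣ) : Omg p) ∈ frobeniusFixed p (a * m) :=
    pow_eq_self_of_mem_rootsOfUnity hq y.2
  rw [sum_momentCoeff_mul, addChar_traceZmod_sum]
  · rfl
  · exact fun b _ ↦ Gval_mem (fun μ ↦ mem_frobeniusFixed_mul (hf μ) m)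
      (fun g ↦ mem_frobeniusFixed_mul (hP g) m) (fun _ ↦ hmem _) (fun _ ↦ hmem _)

end Moment

section Integrality

open Finset Polynomial

theorem sum_coeff_mul_sum_pow {L ι : Type*} [CommRing L] [Fintype ι] (l : L[X]) (α : ι → L)
    (j : ℕ) : ∑ m ∈ range (l.natDegree + 1), l.coeff m * ∑ i, α i ^ (m + j) =
      ∑ i, l.eval (α i) * α i ^ j := by
  simp only [mul_sum, eval_eq_sum_range, sum_mul]
  rw [Finset.sum_comm]
  simp only [pow_add, mul_assoc]

variable {A L : Type*} [CommRing A] [IsNoetherianRing A] [Field L] [Algebra A L]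

theorem isIntegral_of_forall_mul_pow_mem {w c : L} (hw : w ≠ 0) {M : Submodule A L} (hM : M.FG)
    (h : ∀ j, w * c ^ j ∈ M) : IsIntegral A c := by
  let N := Submodule.span A (Set.range fun j ↦ w * c ^ j)
  have hwN : w ∈ N := Submodule.subset_span ⟨0, by simp⟩
  have : IsNoetherian A M := isNoetherian_of_fg_of_noetherian _ hM
  refine isIntegral_of_smul_mem_submodule N (fun hN ↦ hw ?_)
    (Submodule.FG.of_le hM (Submodule.span_le.2 (Set.range_subset_iff.2 h))) c fun x hx ↦ ?_
  · rwa [hN, Submodule.mem_bot] at hwN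
  · have hle : N ≤ N.comap (LinearMap.mulLeft A c) := Submodule.span_le.2 <|
      Set.range_subset_iff.2 fun j ↦ Submodule.subset_span ⟨j + 1, by simp; ring⟩
    exact hle hx

variable [CharZero L] {M : Submodule A L} {ι κ : Type*} [Fintype ι] [Fintype κ]
  {α : ι → L} {β : κ → L}

theorem isIntegral_of_sum_pow_sub_sum_pow_mem (hM : M.FG) (hred : ∀ i j, α i ≠ β j)
    (h : ∀ m, 1 ≤ m → ∑ i, α i ^ m - ∑ j, β j ^ m ∈ M) (i : ι) : IsIntegral A (α i) := by
  rcases eq_or_ne (α i) 0 with h0 | h0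
  · exact h0 ▸ isIntegral_zero
  -- The factor `X` of `l` keeps the power sums with exponent `0` out of the linear recurrence.
  let l : L[X] := ∏ x ∈ insert 0 ((univ.image α ∪ univ.image β).erase (α i)), (X - C x)
  have hl : l.eval (α i) ≠ 0 := by
    simpa [l, eval_prod, prod_eq_zero_iff, sub_eq_zero] using h0
  have hl0 : l.coeff 0 = 0 := by
    rw [coeff_zero_eq_eval_zero, eval_prod]
    exact prod_eq_zero (mem_insert_self 0 _) (by simp)
  have hlα (i') (hi : α i' ≠ α i) : l.eval (α i') = 0 := by
    rw [eval_prod]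
    exact prod_eq_zero (i := α i') (by simp [hi]) (by simp)
  have hlβ (j) : l.eval (β j) = 0 := by
    rw [eval_prod]
    exact prod_eq_zero (i := β j) (by simp [(hred i j).symm]) (by simp)
  have hcard : (#{i' | α i' = α i} : L) ≠ 0 :=
    Nat.cast_ne_zero.2 (card_ne_zero_of_mem (a := i) (by simp))
  refine isIntegral_of_forall_mul_pow_mem (mul_ne_zero hcard hl)
    (M := ⨆ m ∈ range (l.natDegree + 1), M.map (LinearMap.mulLeft A (l.coeff m)))
    (Submodule.fg_biSup _ _ fun m _ ↦ hM.map _) fun j ↦ ?_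
  have key : #{i' | α i' = α i} * l.eval (α i) * α i ^ j = ∑ m ∈ range (l.natDegree + 1),
      l.coeff m * (∑ i, α i ^ (m + j) - ∑ j', β j' ^ (m + j)) := by
    simp only [mul_sub, sum_sub_distrib, sum_coeff_mul_sum_pow, hlβ, zero_mul, sum_const_zero,
      sub_zero]
    rw [← sum_filter_of_ne (p := fun i' ↦ α i' = α i), sum_congr rfl
      fun i' hi ↦ by rw [(mem_filter.1 hi).2], sum_const, nsmul_eq_mul, mul_assoc]
    exact fun i' _ hi ↦ by_contra fun hne ↦ hi (by rw [hlα i' hne, zero_mul])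
  rw [key]
  refine Submodule.sum_mem _ fun m hm ↦ ?_
  rcases Nat.eq_zero_or_pos m with rfl | hm0
  · simp [hl0]
  · exact Submodule.mem_iSup_of_mem m (Submodule.mem_iSup_of_mem hm ⟨_, h (m + j) (by omega), rfl⟩)

end Integrality

section CharacterValues

theorem isIntegral_addChar_apply {G R : Type*} [AddGroup G] [Finite G] [CommRing R]
    (χ : AddChar G R) (z : G) : IsIntegral ℤ (χ z) := by
  refine IsIntegral.of_pow (addOrderOf_pos z) ?_
  rw [← AddChar.map_nsmul_eq_pow, addOrderOf_nsmul_eq_zero, AddChar.map_zero_eq_one]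
  exact isIntegral_one

variable {p : ℕ} [Fact p.Prime] {R : Type*} [CommRing R] (χ : AddChar (ZMod p) R)
  {ι E : Type*} [Fintype ι] [Fintype E] (c : E → Omg p) (ν : E → ι → ℤ)

theorem exists_fg_subalgebra_torusCharSum_mem :
    ∃ A : Subalgebra ℤ R, (Subalgebra.toSubmodule A).FG ∧ ∀ d, torusCharSum χ c ν d ∈ A := by
  refine ⟨Algebra.adjoin ℤ (Set.range χ), fg_adjoin_of_finite (Set.finite_range _) ?_, fun d ↦ ?_⟩
  · rintro _ ⟨z, rfl⟩
    exact isIntegral_addChar_apply χ z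
  · refine finsum_mem_induction (· ∈ Algebra.adjoin ℤ (Set.range χ)) (zero_mem _)
      (fun _ _ ↦ add_mem) fun x _ ↦ Algebra.subset_adjoin ⟨_, rfl⟩

theorem map_torusCharSum {R' : Type*} [CommRing R'] (σ : R →+* R') {d : ℕ} (hd : d ≠ 0) :
    σ (torusCharSum χ c ν d) = torusCharSum ((σ : R →* R').compAddChar χ) c ν d := by
  have := neZero_pow_sub_one (p := p) hd
  let _ := Fintype.ofFinite (rootsOfUnity (p ^ d - 1) (Omg p))
  simp only [torusCharSum, finsum_torus (pow_ne_zero d (Fact.out : p.Prime).ne_zero), map_sum]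
  rfl

end CharacterValues

section Pairing

open Cardinal in
theorem nonempty_ringHom_of_embedding {K L : Type*} [Field K] [CharZero K] [Field L] [CharZero L]
    [IsAlgClosed L] (hL : ℵ₀ < #L) (i : K ↪ L) : Nonempty (K →+* L) := by
  obtain ⟨S, hS⟩ := exists_isTranscendenceBasis ℤ K
  obtain ⟨T, hT⟩ := exists_isTranscendenceBasis ℤ L
  have hcard : #L = #T := lift_injective <|
    IsAlgClosed.cardinal_eq_cardinal_transcendence_basis_of_aleph0_lt _ hT (by simp) hL
  obtain ⟨j⟩ := Cardinal.eq.1 hcard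
  let e : S ↪ T := (Function.Embedding.subtype _).trans (i.trans j.toEmbedding)
  let R := Algebra.adjoin ℤ (Set.range ((↑) : S → K))
  let φ : R →+* L :=
    ((MvPolynomial.aeval fun x ↦ (e x : L)).comp hS.1.aevalEquiv.symm.toAlgHom).toRingHom
  have hφ : Function.Injective φ := by
    have := hT.1.comp e e.injective
    exact Function.Injective.comp (g := MvPolynomial.aeval fun x ↦ (e x : L)) this
      hS.1.aevalEquiv.symm.injective
  let _ := φ.toAlgebra
  have : FaithfulSMul R L := (faithfulSMul_iff_algebraMap_injective _ _).2 hφ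
  have := hS.isAlgebraic
  exact ⟨(IsAlgClosed.lift : K →ₐ[R] L).toRingHom⟩

variable (p : ℕ) [Fact p.Prime]

open Cardinal in
theorem nonempty_ringHom_complex_padicComplex : Nonempty (ℂ →+* ℂ_[p]) := by
  have hL : 𝔠 ≤ #ℂ_[p] := continuum_le_cardinal_of_nontriviallyNormedField ℂ_[p]
  obtain ⟨i⟩ := Cardinal.le_def _ _ |>.1 (mk_complex.trans_le hL)
  exact nonempty_ringHom_of_embedding (aleph0_lt_continuum.trans_le hL) i

variable {p}

theorem norm_natCast_prime_padicComplex_lt_one : ‖(p : ℂ_[p])‖ < 1 := by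
  rw [← map_natCast (algebraMap (PadicAlgCl p) ℂ_[p])]
  exact (PadicComplex.norm_extends p _).trans_lt norm_natCast_prime_padicAlgCl_lt_one

theorem exists_eq_pow_mul_of_sum_pow_sub_sum_pow_eq_torusCharSum {a : ℕ} (ha : a ≠ 0)
    {ι E κ κ' : Type*} [Fintype ι] [Fintype E] [Fintype κ] [Fintype κ'] {χ : AddChar (ZMod p) ℂ}
    {c : E → Omg p} (hc : ∀ e, c e ∈ frobeniusFixed p a) {ν : E → ι → ℤ} {α : κ → ℂ} {β : κ' → ℂ}
    (h : ∀ m, 1 ≤ m → ∑ i, α i ^ m - ∑ j, β j ^ m =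
      (-1) ^ Fintype.card ι * torusCharSum χ c ν (a * m)) {j : κ'} (hβ : β j ≠ 0)
    (hred : ∀ i, α i ≠ β j) : ∃ i m, 0 < m ∧ β j = ((p : ℂ) ^ a) ^ m * α i := by
  obtain ⟨σ⟩ := nonempty_ringHom_complex_padicComplex p
  obtain ⟨v, A, hA, hconv, hv⟩ :=
    exists_hasPowerSums_torusCharSum ((σ : ℂ →* ℂ_[p]).compAddChar χ) hc ν ha
  have hq : ‖(p : ℂ_[p]) ^ a‖ < 1 := by
    rw [norm_pow]
    exact pow_lt_one₀ (norm_nonneg _) (norm_natCast_prime_padicComplex_lt_one) ha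
  have hσ (m : ℕ) (hm : 1 ≤ m) : ∑ i, σ (α i) ^ m - ∑ j, σ (β j) ^ m =
      (1 - ((p : ℂ_[p]) ^ a) ^ m) ^ Fintype.card ι * v m := by
    have := congrArg σ (h m hm)
    simp only [map_sub, map_sum, map_mul, map_pow, map_neg, map_one,
      map_torusCharSum χ c ν σ (mul_ne_zero ha (Nat.one_le_iff_ne_zero.1 hm)), hv m hm] at this
    rw [this, ← mul_assoc, ← mul_pow, neg_one_mul, neg_sub]
  obtain ⟨i, m, hm, hij⟩ := hA.exists_eq_pow_mul_of_pole hconv hq hσ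
    ((map_ne_zero σ).2 hβ) fun i ↦ σ.injective.ne (hred i)
  exact ⟨i, m, hm, σ.injective (by simpa using hij)⟩

end Pairing

theorem tensor_power_integral_and_pairing_general
    (p a n s k : ℕ) [Fact p.Prime] (ha : 1 ≤ a)
    (Θ : AddChar (ZMod p) ℂ)
    (f : (Fin n → ℤ) →₀ Omg p) (hf : ∀ μ, f μ ^ p ^ a = f μ)
    (P : ((Fin n → ℤ) × (Fin s → ℤ)) →₀ Omg p) (hP : ∀ gm, P gm ^ p ^ a = P gm)
    (R S : ℕ) (α : Fin R → ℂ) (β : Fin S → ℂ)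
    (hβ0 : ∀ j, β j ≠ 0)
    (hred : ∀ i j, α i ≠ β j)
    (hps : ∀ m : ℕ, 1 ≤ m →
      (-1 : ℂ) ^ (s + 1) * Ntor p a Θ f P k m = ∑ j, β j ^ m - ∑ i, α i ^ m) :
    (∀ i, IsIntegral ℤ (α i)) ∧ (∀ j, IsIntegral ℤ (β j)) ∧
      ∀ j, ∃ (i : Fin R) (mj : ℕ), 0 < mj ∧ β j = ((p : ℂ) ^ a) ^ mj * α i := by
  let c := momentCoeff (k := k) f P
  let ν := momentExponent (k := k) f P
  have ha0 : a ≠ 0 := Nat.one_le_iff_ne_zero.1 ha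
  have hc (e) : c e ∈ frobeniusFixed p a := momentCoeff_mem hf hP e
  have hsum (m : ℕ) (hm : 1 ≤ m) : ∑ i, α i ^ m - ∑ j, β j ^ m =
      (-1) ^ Fintype.card (Fin s ⊕ Fin k × Fin n) * torusCharSum Θ c ν (a * m) := by
    rw [← neg_sub, ← hps m hm,
      Ntor_eq_torusCharSum ha0 Θ hf hP k (Nat.one_le_iff_ne_zero.1 hm)]
    simp only [Fintype.card_sum, Fintype.card_prod, Fintype.card_fin, c, ν]
    ring
  obtain ⟨A, hA, hmem⟩ := exists_fg_subalgebra_torusCharSum_mem Θ c ν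
  have hsumA (m : ℕ) (hm : 1 ≤ m) :
      ∑ i, α i ^ m - ∑ j, β j ^ m ∈ Subalgebra.toSubmodule A := by
    rw [hsum m hm]
    exact A.mul_mem (A.pow_mem (A.neg_mem A.one_mem) _) (hmem _)
  refine ⟨isIntegral_of_sum_pow_sub_sum_pow_mem hA hred hsumA,
    isIntegral_of_sum_pow_sub_sum_pow_mem hA (fun j i ↦ (hred i j).symm) fun m hm ↦ ?_,
    fun j ↦ exists_eq_pow_mul_of_sum_pow_sub_sum_pow_eq_torusCharSum ha0 hc hsum (hβ0 j)
      fun i ↦ hred i j⟩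
  rw [← neg_sub]
  exact neg_mem (hsumA m hm)

/-- integrality of the reciprocal zeros/poles and pole-zero pairing:
each reciprocal pole is `q^{m_j}` times some reciprocal zero, `m_j ≥ 1`. -/
theorem tensor_power_integral_and_pairing
    (p a n s k : ℕ) [Fact p.Prime] (ha : 1 ≤ a) (hn : 1 ≤ n) (hs : 1 ≤ s) (hk : 1 ≤ k)
    (ζ : ℂ) (hζ : IsPrimitiveRoot ζ p)
    (Θ : AddChar (ZMod p) ℂ) (hΘ : Θ ≠ 1) (hΘval : ∀ z, Θ z ∈ cyclo ζ)
    (f : (Fin n → ℤ) →₀ Omg p) (hf : ∀ μ, f μ ^ p ^ a = f μ)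
    (P : ((Fin n → ℤ) × (Fin s → ℤ)) →₀ Omg p) (hP : ∀ gm, P gm ^ p ^ a = P gm)
    (hdim : Submodule.span ℝ (NewtonPoly f) = ⊤)
    (hnd : Nondeg f)
    (hwt : ∀ gm ∈ P.support, gauge (NewtonPoly f) (toR gm.1) < 1)
    (hΓ : relPoly f P ≠ {0})
    (R S : ℕ) (α : Fin R → ℂ) (β : Fin S → ℂ)
    (hα0 : ∀ i, α i ≠ 0) (hβ0 : ∀ j, β j ≠ 0)
    (hred : ∀ i j, α i ≠ β j)
    (hps : ∀ m : ℕ, 1 ≤ m →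
      (-1 : ℂ) ^ (s + 1) * Ntor p a Θ f P k m = ∑ j, β j ^ m - ∑ i, α i ^ m) :
    (∀ i, IsIntegral ℤ (α i)) ∧ (∀ j, IsIntegral ℤ (β j)) ∧
      ∀ j, ∃ (i : Fin R) (mj : ℕ), 0 < mj ∧ β j = ((p : ℂ) ^ a) ^ mj * α i :=
  tensor_power_integral_and_pairing_general p a n s k ha Θ f hf P hP R S α β hβ0 hred hps

end HS
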